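/- arXiv:1705.09574 — 10 statements merged into one kernel-verified Lean document; each statement's English description precedes it below -/
import Mathlib

section
/- A coherent set of almost desirable gambles K ⊆ ℝ^n is maximal (i.e., there is no coherent set of almost desirable gambles K' with K ⊊ K') if and only if there exists a unique vector v ∈ ℝ^n with v > 0_n and ‖v‖ = 1 such that K = {g ∈ ℝ^n : ⟨v, g⟩ ≥ 0}. -/
open BigOperators

/-- A coherent set of almost desirable gambles on an `n`-element outcome space,
gambles being identified with vectors in `ℝ^n`. -/
def CohAlmostDesirable {n : ℕ} (K : Set (Fin n → ℝ)) : Prop :=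
  (∀ g ∈ K, ∀ f ∈ K, g + f ∈ K) ∧                                    -- A1
  (∀ g ∈ K, ∀ l : ℝ, 0 < l → l • g ∈ K) ∧                            -- A2
  (∀ g : Fin n → ℝ, (∀ i, 0 ≤ g i) → g ≠ 0 → g ∈ K) ∧                -- A3
  ((fun _ : Fin n => (-1 : ℝ)) ∉ K) ∧                                 -- A6
  (∀ g : Fin n → ℝ, (∀ f : Fin n → ℝ, (∀ i, 0 ≤ f i) → f ≠ 0 → g + f ∈ K) → g ∈ K)  -- A7

open Matrix in
theorem aux_sum_pos {n : ℕ} (v : Fin n → ℝ) (h0 : ∀ i, 0 ≤ v i) (hv : v ≠ 0) :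
    0 < v ⬝ᵥ (fun _ => (1:ℝ)) := by
  obtain ⟨i, hi⟩ := Function.ne_iff.1 hv
  have : 0 < v i := lt_of_le_of_ne (h0 i) (Ne.symm hi)
  simp only [dotProduct, mul_one]
  exact Finset.sum_pos' (fun i _ => h0 i) ⟨i, Finset.mem_univ _, this⟩

open Matrix in
theorem aux_coh {n : ℕ} (v : Fin n → ℝ) (h0 : ∀ i, 0 ≤ v i) (hv : v ≠ 0) :
    CohAlmostDesirable {g : Fin n → ℝ | 0 ≤ v ⬝ᵥ g} := by
  have hp := aux_sum_pos v h0 hv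
  refine ⟨?_, ?_, ?_, ?_, ?_⟩
  · intro g hg f hf
    simp only [Set.mem_setOf_eq, dotProduct_add] at *
    linarith
  · intro g hg l hl
    simp only [Set.mem_setOf_eq, dotProduct_smul, smul_eq_mul] at *
    positivity
  · intro g hg _
    exact Finset.sum_nonneg fun i _ => mul_nonneg (h0 i) (hg i)
  · intro h
    have e : (fun _ : Fin n => (-1:ℝ)) = -(fun _ => 1) := by ext; simp
    rw [e, Set.mem_setOf_eq, dotProduct_neg] at h
    linarith
  · intro g hg
    by_contra hneg
    simp only [Set.mem_setOf_eq, not_le] at hneg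
    obtain ⟨i0, -⟩ := Function.ne_iff.1 hv
    set s := v ⬝ᵥ (fun _ => (1:ℝ)) with hs
    have he : 0 < -(v ⬝ᵥ g) / (2 * s) := div_pos (by linarith) (by linarith)
    have := hg ((-(v ⬝ᵥ g) / (2 * s)) • (fun _ => (1:ℝ))) (fun i => by simpa using he.le)
      (fun h => by
        have := congrFun h i0
        simp only [Pi.smul_apply, smul_eq_mul, mul_one, Pi.zero_apply] at this
        exact he.ne' this)
    simp only [Set.mem_setOf_eq, dotProduct_add, dotProduct_smul, smul_eq_mul, ← hs] at this
    have h2 : -(v ⬝ᵥ g) / (2 * s) * s = -(v ⬝ᵥ g) / 2 := by field_simp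
    linarith

open Matrix in
theorem aux_sep {n : ℕ} (K : Set (Fin n → ℝ)) (hK : CohAlmostDesirable K) :
    ∃ v : Fin n → ℝ, (∀ i, 0 ≤ v i) ∧ v ≠ 0 ∧ ∀ g ∈ K, 0 ≤ v ⬝ᵥ g := by
  obtain ⟨A1, A2, A3, A6, A7⟩ := hK
  have z : (0 : Fin n → ℝ) ∈ K := A7 0 (fun f hf h => by simpa using A3 f hf h)
  have hne : Nonempty (Fin n) := by
    by_contra h
    rw [not_nonempty_iff] at h
    exact A6 (by convert z)
  have hconv : Convex ℝ K := by
    intro x hx y hy a b ha hb hab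
    have sm : ∀ x ∈ K, ∀ a : ℝ, 0 ≤ a → a • x ∈ K := by
      intro x hx a ha
      rcases ha.eq_or_lt with rfl | h
      · simpa using z
      · exact A2 x hx a h
    exact A1 _ (sm x hx a ha) _ (sm y hy b hb)
  let P : Set (Fin n → ℝ) := Set.univ.pi fun _ => Set.Iio 0
  have hP : IsOpen P := isOpen_set_pi Set.finite_univ fun _ _ => isOpen_Iio
  have hPc : Convex ℝ P := convex_pi fun _ _ => convex_Iio 0
  have hd : Disjoint P K := by
    rw [Set.disjoint_left]
    intro g hg hgK
    have hg : ∀ i, g i < 0 := fun i => hg i (Set.mem_univ i)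
    obtain ⟨i, hi⟩ := Finite.exists_max g
    have hl : 0 < (-(g i))⁻¹ := inv_pos.2 (by linarith [hg i])
    have hm := A2 g hgK _ hl
    by_cases h : (fun _ : Fin n => (-1 : ℝ)) - (-(g i))⁻¹ • g = 0
    · rw [sub_eq_zero] at h
      exact A6 (h ▸ hm)
    · apply A6
      have := A1 _ hm _ (A3 _ (fun j => ?_) h)
      · simpa using this
      · have h1 : (-(g i))⁻¹ * (-(g i)) = 1 := inv_mul_cancel₀ (by linarith [hg i])
        have h2 := mul_le_mul_of_nonneg_left (hi j) hl.le
        simp only [Pi.sub_apply, Pi.smul_apply, smul_eq_mul]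
        linarith
  obtain ⟨f, u, hu, hk⟩ := geometric_hahn_banach_open hPc hP hconv hd
  have hu0 : u ≤ 0 := by simpa using hk 0 z
  have hfK : ∀ g ∈ K, 0 ≤ f g := by
    intro g hg
    by_contra h
    push Not at h
    have := hk _ (A2 g hg ((u - 1) / f g) (div_pos_of_neg_of_neg (by linarith) h))
    rw [map_smul, smul_eq_mul, div_mul_cancel₀ _ h.ne] at this
    linarith
  have hrep : ∀ g, f g = (fun i => f (Pi.single i 1)) ⬝ᵥ g := by
    intro g
    conv_lhs => rw [pi_eq_sum_univ' g]
    rw [map_sum]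
    simp only [map_smul, smul_eq_mul, dotProduct]
    refine Finset.sum_congr rfl fun i _ => ?_
    rw [mul_comm]
  refine ⟨fun i => f (Pi.single i 1), fun i => hfK _ (A3 _ (fun j => ?_) ?_), ?_, ?_⟩
  · by_cases h : j = i
    · subst h; simp
    · simp [h]
  · intro h
    have := congrFun h i
    simp at this
  · intro h
    have h1 := hu (fun _ => -1) (fun i _ => by simp)
    rw [hrep, h, zero_dotProduct] at h1
    linarith
  · intro g hg
    rw [← hrep]
    exact hfK g hg

/-- A coherent set of almost desirable gambles is maximal iff it is the halfspace
determined by a unique nonnegative unit-norm vector. -/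
theorem almost_desirable_maximal_iff {n : ℕ} (K : Set (Fin n → ℝ))
    (hK : CohAlmostDesirable K) :
    (∀ K' : Set (Fin n → ℝ), CohAlmostDesirable K' → ¬ K ⊂ K') ↔
      ∃! v : Fin n → ℝ, (∀ i, 0 ≤ v i) ∧ v ≠ 0 ∧ Real.sqrt (∑ i, v i ^ 2) = 1 ∧
        K = {g : Fin n → ℝ | 0 ≤ ∑ i, v i * g i} := by
  have sq : ∀ v : Fin n → ℝ, ∑ i, v i ^ 2 = v ⬝ᵥ v := fun v => by
    simp only [dotProduct, pow_two]
  have hdot : ∀ v g : Fin n → ℝ, ∑ i, v i * g i = v ⬝ᵥ g := fun v g => rfl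
  simp only [sq, hdot, Real.sqrt_eq_one]
  constructor
  · intro hmax
    obtain ⟨w, w0, wne, hw⟩ := aux_sep K hK
    have hww : 0 < w ⬝ᵥ w := by
      rw [← sq]
      obtain ⟨i, hi⟩ := Function.ne_iff.1 wne
      exact Finset.sum_pos' (fun i _ => sq_nonneg _) ⟨i, Finset.mem_univ _, pow_pos
        (lt_of_le_of_ne (w0 i) (Ne.symm hi)) 2⟩
    have hr : 0 < (Real.sqrt (w ⬝ᵥ w))⁻¹ := inv_pos.2 (Real.sqrt_pos.2 hww)
    set r := (Real.sqrt (w ⬝ᵥ w))⁻¹ with hrdef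
    have v0 : ∀ i, 0 ≤ (r • w) i := fun i => mul_nonneg hr.le (w0 i)
    have vne : r • w ≠ 0 := smul_ne_zero hr.ne' wne
    have hsub : K ⊆ {g | 0 ≤ (r • w) ⬝ᵥ g} := by
      intro g hg
      rw [Set.mem_setOf_eq, smul_dotProduct]
      exact mul_nonneg hr.le (hw g hg)
    have hKeq : K = {g | 0 ≤ (r • w) ⬝ᵥ g} := by
      by_contra hne
      exact hmax _ (aux_coh _ v0 vne) (hsub.ssubset_of_ne hne)
    have hnorm : (r • w) ⬝ᵥ (r • w) = 1 := by
      rw [smul_dotProduct, dotProduct_smul, smul_eq_mul, smul_eq_mul, hrdef, ← mul_assoc,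
        ← mul_inv, Real.mul_self_sqrt hww.le, inv_mul_cancel₀ hww.ne']
    refine ⟨r • w, ⟨v0, vne, hnorm, hKeq⟩, ?_⟩
    rintro y ⟨y0, yne, ynorm, hy⟩
    generalize r • w = v at *
    have hiff : ∀ g, 0 ≤ y ⬝ᵥ g ↔ 0 ≤ v ⬝ᵥ g := fun g => by
      have := hy.symm.trans hKeq
      exact Set.ext_iff.1 this g
    have hc : 0 ≤ y ⬝ᵥ v := Finset.sum_nonneg fun i _ => mul_nonneg (y0 i) (v0 i)
    have h1 := (hiff (y - (y ⬝ᵥ v) • v)).2 (by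
      rw [dotProduct_sub, dotProduct_smul, hnorm, dotProduct_comm v y]; simp)
    have h2 := (hiff (-(y - (y ⬝ᵥ v) • v))).2 (by
      rw [dotProduct_neg, dotProduct_sub, dotProduct_smul, hnorm, dotProduct_comm v y]; simp)
    simp only [dotProduct_neg, dotProduct_sub, dotProduct_smul, smul_eq_mul, ynorm] at h1 h2
    have hone : y ⬝ᵥ v = 1 := by nlinarith
    have : (y - v) ⬝ᵥ (y - v) = 0 := by
      rw [sub_dotProduct, dotProduct_sub, dotProduct_sub, dotProduct_comm v y, hone, ynorm, hnorm]
      ring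
    exact sub_eq_zero.1 (dotProduct_self_eq_zero.1 this)
  · rintro ⟨v, ⟨v0, vne, -, hKv⟩, -⟩ K' ⟨A1, A2, A3, A6, A7⟩ hss
    obtain ⟨g, hg, hgK⟩ := Set.exists_of_ssubset hss
    rw [hKv, Set.mem_setOf_eq, not_le] at hgK
    have hp := aux_sum_pos v v0 vne
    set s := v ⬝ᵥ (fun _ => (1:ℝ)) with hs
    have hl : 0 < s / -(v ⬝ᵥ g) := div_pos hp (by linarith)
    have hmem : -(fun _ => (1:ℝ)) - (s / -(v ⬝ᵥ g)) • g ∈ K := by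
      rw [hKv, Set.mem_setOf_eq, dotProduct_sub, dotProduct_neg, dotProduct_smul, ← hs, smul_eq_mul]
      have : s / -(v ⬝ᵥ g) * (v ⬝ᵥ g) = -s := by
        have := hgK.ne
        field_simp
      linarith
    apply A6
    have := A1 _ (hss.1 hmem) _ (A2 g hg _ hl)
    rw [sub_add_cancel] at this
    exact this
end

section
/- Let G ⊆ ℝ^n be a nonempty convex set and ḡ ∈ ℝ^n with ḡ ∉ G. Then there exist a matrix A ∈ ℝ^{n×n} and a vector b ∈ ℝ^n such that Ag >_L b and b ≥_L Aḡ for all g ∈ G, where >_L and ≥_L denote the strict and non-strict lexicographic order on ℝ^n. -/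
open Matrix BigOperators

/-- `g <_L f`: `g` is lexicographically less than `f`, i.e. at the first index where they
differ, `g` is smaller. -/
def LexLt {n : ℕ} (g f : Fin n → ℝ) : Prop :=
  ∃ k : Fin n, (∀ i : Fin n, i < k → g i = f i) ∧ g k < f k

/-- `g ≤_L f`: `g <_L f` or `g = f`. -/
def LexLe {n : ℕ} (g f : Fin n → ℝ) : Prop := LexLt g f ∨ g = f

/-- `A >_L 0_n`: every column of `A` is lexicographically positive. -/
def ColsLexPos {n : ℕ} (A : Matrix (Fin n) (Fin n) ℝ) : Prop :=
  ∀ j : Fin n, LexLt 0 (fun i => A i j)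

/-- A coherent set of desirable gambles on an `n`-element outcome space. -/
def CohDesirable {n : ℕ} (K : Set (Fin n → ℝ)) : Prop :=
  (∀ g ∈ K, ∀ f ∈ K, g + f ∈ K) ∧                      -- A1
  (∀ g ∈ K, ∀ l : ℝ, 0 < l → l • g ∈ K) ∧              -- A2
  (∀ g : Fin n → ℝ, (∀ i, 0 ≤ g i) → g ≠ 0 → g ∈ K) ∧  -- A3
  (0 : Fin n → ℝ) ∉ K                                   -- A4

theorem aux_support {V : Type*} [NormedAddCommGroup V] [NormedSpace ℝ V] [FiniteDimensional ℝ V]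
    [Nontrivial V] (C : Set V) (hC : Convex ℝ C) (h0 : (0 : V) ∉ C) :
    ∃ f : V →ₗ[ℝ] ℝ, f ≠ 0 ∧ ∀ g ∈ C, 0 ≤ f g := by
  rcases C.eq_empty_or_nonempty with rfl | ⟨c, hc⟩
  · obtain ⟨x, hx⟩ := exists_ne (0 : V)
    obtain ⟨f, hf, -⟩ := Submodule.exists_le_ker_of_lt_top (⊥ : Submodule ℝ V) bot_lt_top
    exact ⟨f, hf, by simp⟩
  by_cases hs : affineSpan ℝ C = ⊤
  · have hi : (interior C).Nonempty := hC.interior_nonempty_iff_affineSpan_eq_top.2 hs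
    obtain ⟨f, hf⟩ := geometric_hahn_banach_open_point hC.interior isOpen_interior
      (fun h => h0 (interior_subset h))
    refine ⟨-(f : V →ₗ[ℝ] ℝ), ?_, ?_⟩
    · intro h
      obtain ⟨x, hx⟩ := hi
      have h1 := hf x hx
      have h2 := LinearMap.congr_fun h x
      simp at h1 h2
      linarith
    · intro g hg
      have hcl : g ∈ closure (interior C) := by
        rw [hC.closure_interior_eq_closure_of_nonempty_interior hi]
        exact subset_closure hg
      have hcl2 : closure (interior C) ⊆ {x | f x ≤ 0} := by
        refine closure_minimal ?_ (isClosed_le f.continuous continuous_const)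
        intro x hx
        have := hf x hx
        simp at this
        exact this.le
      have := hcl2 hcl
      simpa using this
  · have hd : (affineSpan ℝ C).direction < ⊤ := by
      rw [lt_top_iff_ne_top]
      intro h
      exact hs ((AffineSubspace.direction_eq_top_iff_of_nonempty
        ⟨c, subset_affineSpan ℝ C hc⟩).1 h)
    obtain ⟨f, hf, hk⟩ := Submodule.exists_le_ker_of_lt_top _ hd
    have key : ∀ g ∈ C, f g = f c := by
      intro g hg
      have h := hk (AffineSubspace.vsub_mem_direction (subset_affineSpan ℝ C hg)
        (subset_affineSpan ℝ C hc))
      simp [sub_eq_zero] at h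
      exact h
    rcases le_total 0 (f c) with h | h
    · exact ⟨f, hf, fun g hg => by rw [key g hg]; exact h⟩
    · exact ⟨-f, neg_ne_zero.2 hf, fun g hg => by simp [key g hg, h]⟩

theorem aux_lex (m : ℕ) : ∀ (V : Type) [NormedAddCommGroup V] [NormedSpace ℝ V]
    [FiniteDimensional ℝ V] (_ : Module.finrank ℝ V = m) (C : Set V) (_ : Convex ℝ C)
    (_ : (0 : V) ∉ C), ∃ f : Fin m → (V →ₗ[ℝ] ℝ),
      ∀ g ∈ C, ∃ k, (∀ i, i < k → f i g = 0) ∧ 0 < f k g := by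
  induction m with
  | zero =>
    intro V _ _ _ hm C hC h0
    have := Module.finrank_zero_iff.1 hm
    exact ⟨fun _ => 0, fun g hg => (h0 (Subsingleton.elim g 0 ▸ hg)).elim⟩
  | succ m ih =>
    intro V _ _ _ hm C hC h0
    have : Nontrivial V := Module.nontrivial_of_finrank_pos (R := ℝ) (by omega)
    obtain ⟨f, hf, hpos⟩ := aux_support C hC h0
    have hker : Module.finrank ℝ (LinearMap.ker f) = m := by
      have h1 := f.finrank_range_add_finrank_ker
      have h2 : LinearMap.range f = ⊤ := LinearMap.range_eq_top.2 (LinearMap.surjective hf)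
      rw [h2] at h1
      simp at h1
      omega
    obtain ⟨F, hF⟩ := ih (LinearMap.ker f) hker (Subtype.val ⁻¹' C)
      (hC.linear_preimage (LinearMap.ker f).subtype) (by simpa using h0)
    choose F' hF' using fun i => LinearMap.exists_extend (F i)
    have hFF : ∀ i (x : LinearMap.ker f), F' i x = F i x := fun i x => by
      rw [← hF' i]; rfl
    refine ⟨Fin.cons f F', fun g hg => ?_⟩
    rcases (hpos g hg).lt_or_eq with h | h
    · exact ⟨0, fun i hi => (Fin.not_lt_zero i hi).elim, by simpa using h⟩
    · obtain ⟨k, hk1, hk2⟩ := hF ⟨g, h.symm⟩ hg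
      refine ⟨k.succ, fun i hi => ?_, ?_⟩
      · induction i using Fin.cases with
        | zero => simpa using h.symm
        | succ i =>
          have := hk1 i (Fin.succ_lt_succ_iff.1 hi)
          rw [← hFF] at this
          simpa using this
      · rw [← hFF] at hk2
        simpa using hk2

/-- Lexicographic separation theorem for convex sets (Martínez-Legaz). -/
theorem lexicographic_separation {n : ℕ} (G : Set (Fin n → ℝ)) (hne : G.Nonempty)
    (hconv : Convex ℝ G) (gbar : Fin n → ℝ) (hgbar : gbar ∉ G) :
    ∃ (A : Matrix (Fin n) (Fin n) ℝ) (b : Fin n → ℝ),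
      (∀ g ∈ G, LexLt b (A.mulVec g)) ∧ LexLe (A.mulVec gbar) b := by
  obtain ⟨f, hf⟩ := aux_lex n (Fin n → ℝ) (by simp) ((fun x => gbar + x) ⁻¹' G)
    (hconv.translate_preimage_right gbar) (by simpa using hgbar)
  have hA : ∀ x i, (LinearMap.toMatrix' (LinearMap.pi f)).mulVec x i = f i x := by
    intro x i
    rw [LinearMap.toMatrix'_mulVec]
    rfl
  refine ⟨LinearMap.toMatrix' (LinearMap.pi f), _, fun g hg => ?_, Or.inr rfl⟩
  obtain ⟨k, h1, h2⟩ := hf (g - gbar) (by simpa using hg)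
  refine ⟨k, fun i hi => ?_, ?_⟩
  · have := h1 i hi
    rw [map_sub] at this
    rw [hA, hA]
    linarith
  · rw [map_sub] at h2
    rw [hA, hA]
    linarith
end

section
/- For every coherent set of desirable gambles K ⊆ ℝ^n, there exist an index set T and matrices A^t ∈ ℝ^{n×n} for t ∈ T, each with orthonormal rows and with every column lexicographically positive (A^t >_L 0_n), such that K = {g ∈ ℝ^n : A^t g >_L 0_n for all t ∈ T}. -/
open Matrix BigOperators

open Module in
theorem weak_sep {E : Type} [NormedAddCommGroup E] [InnerProductSpace ℝ E] [FiniteDimensional ℝ E]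
    [Nontrivial E] (C : Set E) (hadd : ∀ x ∈ C, ∀ y ∈ C, x + y ∈ C)
    (hsmul : ∀ x ∈ C, ∀ l : ℝ, 0 < l → l • x ∈ C) (h0 : (0 : E) ∉ C) :
    ∃ u : E, ‖u‖ = 1 ∧ ∀ x ∈ C, 0 ≤ inner ℝ u x := by
  suffices h : ∃ u : E, u ≠ 0 ∧ ∀ x ∈ C, 0 ≤ inner ℝ u x by
    obtain ⟨u, hu, h⟩ := h
    refine ⟨‖u‖⁻¹ • u, norm_smul_inv_norm hu, fun x hx => ?_⟩
    rw [real_inner_smul_left]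
    exact mul_nonneg (by positivity) (h x hx)
  by_cases hs : Submodule.span ℝ C = ⊤
  · have hconv : Convex ℝ C := by
      intro x hx y hy a b ha hb hab
      rcases ha.eq_or_lt with rfl | ha
      · have : b = 1 := by linarith
        simpa [this] using hy
      rcases hb.eq_or_lt with rfl | hb
      · have : a = 1 := by linarith
        simpa [this] using hx
      exact hadd _ (hsmul x hx a ha) _ (hsmul y hy b hb)
    have hne : C.Nonempty := by
      by_contra h
      rw [Set.not_nonempty_iff_eq_empty] at h
      subst h
      rw [Submodule.span_empty] at hs
      exact bot_ne_top hs
    have hint : (interior C).Nonempty := by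
      rw [hconv.interior_nonempty_iff_affineSpan_eq_top,
        AffineSubspace.affineSpan_eq_top_iff_vectorSpan_eq_top_of_nonempty ℝ E E hne, eq_top_iff,
        ← hs, Submodule.span_le]
      intro x hx
      have := vsub_mem_vectorSpan ℝ (hsmul x hx 2 (by norm_num)) hx
      have e : (2:ℝ) • x -ᵥ x = x := by rw [vsub_eq_sub, two_smul]; simp
      rwa [e] at this
    obtain ⟨f, hf⟩ := geometric_hahn_banach_open_point hconv.interior isOpen_interior
      (fun h => h0 (interior_subset h))
    have hf' : ∀ x ∈ C, f x ≤ 0 := by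
      intro x hx
      have hx' : x ∈ closure (interior C) := by
        rw [hconv.closure_interior_eq_closure_of_nonempty_interior hint]
        exact subset_closure hx
      have hcl : IsClosed {x | f x ≤ 0} := isClosed_le f.continuous continuous_const
      refine closure_minimal (fun y hy => ?_) hcl hx'
      simpa using (hf y hy).le
    refine ⟨-(InnerProductSpace.toDual ℝ E).symm f, ?_, fun x hx => ?_⟩
    · intro h
      have : f = 0 := by simpa using h
      obtain ⟨y, hy⟩ := hint
      have := hf y hy
      simp_all
    · simpa using hf' x hx
  · have : (Submodule.span ℝ C)ᗮ ≠ ⊥ := fun h => hs (Submodule.orthogonal_eq_bot_iff.1 h)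
    obtain ⟨u, hu, hu0⟩ := Submodule.exists_mem_ne_zero_of_ne_bot this
    refine ⟨u, hu0, fun x hx => ?_⟩
    rw [(Submodule.mem_orthogonal' _ _).1 hu x (Submodule.subset_span hx)]

open Module in
theorem lex_sep (n : ℕ) : ∀ (E : Type) [NormedAddCommGroup E] [InnerProductSpace ℝ E]
    [FiniteDimensional ℝ E], finrank ℝ E = n → ∀ (C : Set E)
    (_ : ∀ x ∈ C, ∀ y ∈ C, x + y ∈ C)
    (_ : ∀ x ∈ C, ∀ l : ℝ, 0 < l → l • x ∈ C) (_ : (0 : E) ∉ C),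
    ∃ b : Fin n → E, Orthonormal ℝ b ∧ ∀ x ∈ C, LexLt 0 (fun i => inner ℝ (b i) x) := by
  induction n with
  | zero =>
    intro E _ _ _ hE C hadd hsmul h0
    have := finrank_zero_iff.1 hE
    refine ⟨Fin.elim0, ⟨fun i => i.elim0, fun i => i.elim0⟩, fun x hx => ?_⟩
    rw [Subsingleton.elim x 0] at hx
    exact absurd hx h0
  | succ n ih =>
    intro E _ _ _ hE C hadd hsmul h0
    have : Nontrivial E := nontrivial_of_finrank_pos (R := ℝ) (by omega)
    obtain ⟨u, hu, hC⟩ := weak_sep C hadd hsmul h0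
    have hu0 : u ≠ 0 := by
      rintro rfl
      simp at hu
    have : Fact (finrank ℝ E = n + 1) := ⟨hE⟩
    obtain ⟨b, hb, hbC⟩ := ih (ℝ ∙ u)ᗮ (Submodule.finrank_orthogonal_span_singleton hu0)
      {x | (x : E) ∈ C} (fun x hx y hy => hadd _ hx _ hy) (fun x hx l hl => hsmul _ hx l hl) h0
    have hub : ∀ i, inner ℝ u (b i : E) = 0 := fun i =>
      Submodule.mem_orthogonal_singleton_iff_inner_right.1 (b i).2
    refine ⟨Fin.cons u (fun i => (b i : E)), ?_, fun x hx => ?_⟩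
    · rw [orthonormal_iff_ite] at hb ⊢
      intro i j
      refine Fin.cases ?_ (fun i => ?_) i <;> refine Fin.cases ?_ (fun j => ?_) j
      · simp [hu]
      · simp [hub, (Fin.succ_ne_zero j).symm]
      · simp [real_inner_comm, hub]
      · simpa using hb i j
    · rcases (hC x hx).eq_or_lt with h | h
      · obtain ⟨k, hk, hk'⟩ := hbC ⟨x, Submodule.mem_orthogonal_singleton_iff_inner_right.2 h.symm⟩ hx
        refine ⟨k.succ, fun i => ?_, by simpa using hk'⟩
        refine Fin.cases ?_ (fun i => ?_) i
        · intro _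
          simpa using h
        · intro hi
          simpa using hk i (by simpa using hi)
      · exact ⟨0, fun i hi => absurd hi (Fin.not_lt_zero i), by simpa using h⟩

theorem lexLt_neg {n : ℕ} (v : Fin n → ℝ) (h : LexLt 0 v) (h' : LexLt 0 (-v)) : False := by
  obtain ⟨k, hk, hk0⟩ := h
  obtain ⟨l, hl, hl0⟩ := h'
  simp only [Pi.zero_apply, Pi.neg_apply] at *
  rcases lt_trichotomy k l with h | h | h
  · have := hl k h
    linarith
  · subst h
    linarith
  · have := hk l h
    linarith

theorem lex_matrix {n : ℕ} (C : Set (Fin n → ℝ)) (hadd : ∀ x ∈ C, ∀ y ∈ C, x + y ∈ C)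
    (hsmul : ∀ x ∈ C, ∀ l : ℝ, 0 < l → l • x ∈ C) (h0 : (0 : Fin n → ℝ) ∉ C) :
    ∃ A : Matrix (Fin n) (Fin n) ℝ, A * Aᵀ = 1 ∧ ∀ x ∈ C, LexLt 0 (A.mulVec x) := by
  obtain ⟨b, hb, hC⟩ := lex_sep n (EuclideanSpace ℝ (Fin n)) (by simp) {x | x.ofLp ∈ C}
    (fun x hx y hy => hadd _ hx _ hy) (fun x hx l hl => hsmul _ hx l hl) h0
  refine ⟨Matrix.of fun i j => b i j, ?_, fun x hx => ?_⟩
  · ext i j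
    rw [orthonormal_iff_ite] at hb
    have := hb i j
    rw [Matrix.mul_apply, Matrix.one_apply, ← this]
    simp [PiLp.inner_apply, mul_comm]
  · have := hC (WithLp.toLp 2 x) hx
    convert this using 1
    ext i
    simp [PiLp.inner_apply, Matrix.mulVec, dotProduct, mul_comm]

theorem sep_one {n : ℕ} (K : Set (Fin n → ℝ)) (hK : CohDesirable K) (g : Fin n → ℝ) (hg : g ∉ K) :
    ∃ A : Matrix (Fin n) (Fin n) ℝ, A * Aᵀ = 1 ∧ (∀ x ∈ K, LexLt 0 (A.mulVec x)) ∧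
      ¬ LexLt 0 (A.mulVec g) := by
  obtain ⟨h1, h2, h3, h4⟩ := hK
  by_cases hg0 : g = 0
  · subst hg0
    obtain ⟨A, hA, h⟩ := lex_matrix K h1 h2 h4
    refine ⟨A, hA, h, ?_⟩
    rintro ⟨k, -, hk⟩
    simp at hk
  refine Exists.elim (lex_matrix
    {x | ∃ l : ℝ, 0 ≤ l ∧ (x + l • g ∈ K ∨ (0 < l ∧ x + l • g = 0))} ?_ ?_ ?_) ?_
  · rintro x ⟨l, hl, hx⟩ y ⟨m, hm, hy⟩
    have e : x + y + (l + m) • g = (x + l • g) + (y + m • g) := by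
      rw [add_smul]; abel
    refine ⟨l + m, by positivity, ?_⟩
    rw [e]
    rcases hx with hx | ⟨hl', hx⟩ <;> rcases hy with hy | ⟨hm', hy⟩
    · exact Or.inl (h1 _ hx _ hy)
    · rw [hy, add_zero]; exact Or.inl hx
    · rw [hx, zero_add]; exact Or.inl hy
    · rw [hx, hy]; exact Or.inr ⟨by positivity, by simp⟩
  · rintro x ⟨l, hl, hx⟩ m hm
    have e : m • x + (m * l) • g = m • (x + l • g) := by
      rw [smul_add, smul_smul]
    refine ⟨m * l, by positivity, ?_⟩
    rw [e]
    rcases hx with hx | ⟨hl', hx⟩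
    · exact Or.inl (h2 _ hx m hm)
    · exact Or.inr ⟨by positivity, by rw [hx, smul_zero]⟩
  · rintro ⟨l, hl, hx | ⟨hl', hx⟩⟩
    · rw [zero_add] at hx
      rcases hl.eq_or_lt with rfl | hl
      · rw [zero_smul] at hx
        exact h4 hx
      · have := h2 _ hx l⁻¹ (by positivity)
        rw [smul_smul, inv_mul_cancel₀ hl.ne', one_smul] at this
        exact hg this
    · rw [zero_add, smul_eq_zero] at hx
      rcases hx with hx | hx
      · exact hl'.ne' hx
      · exact hg0 hx
  · rintro A ⟨hA, h⟩
    refine ⟨A, hA, fun x hx => h x ⟨0, le_rfl, Or.inl (by simpa using hx)⟩, fun hl => ?_⟩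
    have := h (-g) ⟨1, zero_le_one, Or.inr ⟨one_pos, by simp⟩⟩
    rw [Matrix.mulVec_neg] at this
    exact lexLt_neg _ hl this

/-- Every coherent set of desirable gambles is an intersection of lexicographic
halfspaces determined by orthonormal matrices with lexicographically positive columns. -/
theorem desirable_representation {n : ℕ} (K : Set (Fin n → ℝ)) (hK : CohDesirable K) :
    ∃ (T : Type) (A : T → Matrix (Fin n) (Fin n) ℝ),
      (∀ t : T, A t * (A t)ᵀ = 1 ∧ ColsLexPos (A t)) ∧
      K = {g : Fin n → ℝ | ∀ t : T, LexLt 0 ((A t).mulVec g)} := by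
  choose A hA hpos hneg using sep_one K hK
  refine ⟨{g : Fin n → ℝ // g ∉ K}, fun t => A t.1 t.2, fun t => ⟨hA _ _, fun j => ?_⟩, ?_⟩
  · have hj : (Pi.single j 1 : Fin n → ℝ) ∈ K := by
      refine hK.2.2.1 _ (fun i => ?_) (by simp)
      have : (0 : Fin n → ℝ) ≤ Pi.single j 1 := by simp
      exact this i
    have := hpos t.1 t.2 _ hj
    rw [Matrix.mulVec_single_one] at this
    exact this
  · ext g
    refine ⟨fun hg t => hpos _ _ g hg, fun h => ?_⟩
    by_contra hg
    exact hneg g hg (h ⟨g, hg⟩)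
end

section
/- For a matrix A ∈ ℝ^{n×n}, the following are equivalent: (i) every column of A is lexicographically positive (A >_L 0_n); (ii) A = LP for some lower-triangular matrix L ∈ ℝ^{n×n} with ones on the main diagonal and some matrix P ∈ ℝ^{n×n} such that every column p_{·j} of P satisfies p_{·j} > 0_n (i.e., p_{·j} ≥ 0 componentwise and p_{·j} ≠ 0). -/
open Matrix BigOperators

/-- Horner-type recursion. -/
noncomputable def hornerAux (c : ℝ) (a : ℕ → ℝ) : ℕ → ℝ
  | 0 => a 0
  | m + 1 => a (m + 1) + c * hornerAux c a m

lemma hornerAux_zero (c : ℝ) (a : ℕ → ℝ) (k : ℕ) (hz : ∀ i < k, a i = 0) :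
    ∀ i < k, hornerAux c a i = 0 := by
  intro i
  induction i with
  | zero => intro h; simpa [hornerAux] using hz 0 h
  | succ m ih => intro h; simp [hornerAux, hz _ h, ih (by omega)]

lemma hornerAux_at (c : ℝ) (a : ℕ → ℝ) (k : ℕ) (hz : ∀ i < k, a i = 0) :
    hornerAux c a k = a k := by
  cases k with
  | zero => rfl
  | succ m => simp [hornerAux, hornerAux_zero c a (m+1) hz m (by omega)]

lemma hornerAux_ge (c : ℝ) (a : ℕ → ℝ) (k : ℕ) (hz : ∀ i < k, a i = 0) (hc0 : 0 ≤ c)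
    (hc : ∀ i, a k + |a i| ≤ c * a k) (i : ℕ) (hi : k ≤ i) : a k ≤ hornerAux c a i := by
  induction i, hi using Nat.le_induction with
  | base => rw [hornerAux_at c a k hz]
  | succ m hm ih =>
    have h1 := hc (m+1)
    have h2 := mul_le_mul_of_nonneg_left ih hc0
    have h3 := neg_abs_le (a (m+1))
    simp only [hornerAux]
    linarith

/-- A matrix has all columns lexicographically positive iff it factors as `L * P` with `L`
unitary lower-triangular and every column of `P` nonnegative and nonzero. -/
theorem colsLexPos_iff_factorization {n : ℕ} (A : Matrix (Fin n) (Fin n) ℝ) :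
    ColsLexPos A ↔ ∃ L P : Matrix (Fin n) (Fin n) ℝ,
      (∀ i j : Fin n, i < j → L i j = 0) ∧ (∀ i : Fin n, L i i = 1) ∧
      (∀ j : Fin n, (∀ i, 0 ≤ P i j) ∧ (fun i => P i j) ≠ 0) ∧
      A = L * P := by
  constructor
  · intro hA
    choose k hz hk using hA
    simp only [Pi.zero_apply] at hz hk
    set a : Fin n → ℕ → ℝ := fun j m => if h : m < n then A ⟨m, h⟩ j else 0 with ha
    have haA : ∀ (i j : Fin n), a j i = A i j := by intro i j; simp [ha]
    set c : ℝ := 1 + ∑ j, ∑ i, |A i j| / A (k j) j with hcdef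
    have hnn : ∀ j i, 0 ≤ |A i j| / A (k j) j := fun j i => div_nonneg (abs_nonneg _) (hk j).le
    have hs : 0 ≤ ∑ j, ∑ i, |A i j| / A (k j) j :=
      Finset.sum_nonneg fun j _ => Finset.sum_nonneg fun i _ => hnn j i
    have hc0 : 0 ≤ c := by linarith
    have hcA : ∀ i j, A (k j) j + |A i j| ≤ c * A (k j) j := by
      intro i j
      have h1 : |A i j| / A (k j) j ≤ ∑ i, |A i j| / A (k j) j :=
        Finset.single_le_sum (f := fun i => |A i j| / A (k j) j)
          (fun i _ => hnn j i) (Finset.mem_univ i)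
      have h2 : ∑ i, |A i j| / A (k j) j ≤ ∑ j, ∑ i, |A i j| / A (k j) j :=
        Finset.single_le_sum (f := fun j => ∑ i, |A i j| / A (k j) j)
          (fun j _ => Finset.sum_nonneg fun i _ => hnn j i) (Finset.mem_univ j)
      have h3 := (div_le_iff₀ (hk j)).1 (h1.trans h2)
      rw [hcdef, add_mul, one_mul]
      linarith
    have hza : ∀ j, ∀ i < (k j : ℕ), a j i = 0 := by
      intro j i hi
      have := hz j ⟨i, hi.trans (k j).2⟩ hi
      rw [← haA] at this
      exact this.symm
    have hca : ∀ j i, a j (k j) + |a j i| ≤ c * a j (k j) := by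
      intro j i
      rw [haA]
      by_cases h : i < n
      · have := hcA ⟨i, h⟩ j
        rw [← haA ⟨i, h⟩ j] at this
        exact this
      · have := hcA (k j) j
        have h0 : a j i = 0 := by simp [ha, h]
        rw [h0, abs_zero]
        linarith [abs_nonneg (A (k j) j)]
    refine ⟨Matrix.of fun i l => if i = l then 1 else if (i : ℕ) = l + 1 then -c else 0,
      Matrix.of fun i j => hornerAux c (a j) i, ?_, ?_, ?_, ?_⟩
    · intro i j hij
      have h : (i : ℕ) < j := hij
      rw [Matrix.of_apply, if_neg hij.ne, if_neg (by omega)]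
    · intro i; simp
    · intro j
      constructor
      · intro i
        rw [Matrix.of_apply]
        rcases lt_or_ge (i : ℕ) (k j) with h | h
        · rw [hornerAux_zero c (a j) _ (hza j) _ h]
        · have := hornerAux_ge c (a j) _ (hza j) hc0 (hca j) _ h
          rw [haA] at this
          exact (hk j).le.trans this
      · intro h
        have h1 := congrFun h (k j)
        simp only [Pi.zero_apply, Matrix.of_apply] at h1
        rw [hornerAux_at c (a j) _ (hza j), haA] at h1
        exact (hk j).ne' h1
    · ext ⟨i, hi⟩ j
      rw [Matrix.mul_apply, ← haA]
      simp only [Matrix.of_apply]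
      cases i with
      | zero =>
        rw [Finset.sum_eq_single ⟨0, hi⟩]
        · simp [hornerAux]
        · intro b _ hb
          rw [if_neg (Ne.symm hb), if_neg (by simp), zero_mul]
        · simp
      | succ m =>
        have hne : (⟨m+1, hi⟩ : Fin n) ≠ ⟨m, by omega⟩ := by simp
        rw [Finset.sum_eq_add_of_mem (⟨m+1, hi⟩ : Fin n) ⟨m, by omega⟩
          (Finset.mem_univ _) (Finset.mem_univ _) hne]
        · simp [hornerAux]
        · rintro b _ ⟨hb1, hb2⟩
          rw [if_neg (Ne.symm hb1), if_neg, zero_mul]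
          intro h
          apply hb2
          ext
          simp at h
          simp [h]
  · rintro ⟨L, P, hL, hL1, hP, rfl⟩ j
    obtain ⟨hP0, hPne⟩ := hP j
    have hex : ∃ m : ℕ, ∃ h : m < n, P ⟨m, h⟩ j ≠ 0 := by
      obtain ⟨i, hi⟩ := Function.ne_iff.1 hPne
      exact ⟨i, i.2, hi⟩
    classical
    obtain ⟨hkn, hk⟩ := Nat.find_spec hex
    have hmin : ∀ i : Fin n, (i : ℕ) < Nat.find hex → P i j = 0 := by
      intro i hi
      by_contra h
      exact Nat.find_min hex hi ⟨i.2, h⟩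
    refine ⟨⟨Nat.find hex, hkn⟩, ?_, ?_⟩
    · intro i hi
      symm
      change (L * P) i j = 0
      rw [Matrix.mul_apply]
      apply Finset.sum_eq_zero
      intro l _
      rcases lt_or_ge i l with h | h
      · rw [hL i l h, zero_mul]
      · rw [hmin l (lt_of_le_of_lt h hi), mul_zero]
    · change 0 < (L * P) _ j
      rw [Matrix.mul_apply, Finset.sum_eq_single ⟨Nat.find hex, hkn⟩]
      · rw [hL1, one_mul]
        exact lt_of_le_of_ne (hP0 _) (Ne.symm hk)
      · intro b _ hb
        rcases lt_or_gt_of_ne hb with h | h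
        · rw [hmin b h, mul_zero]
        · rw [hL _ b h, zero_mul]
      · simp
end

section
/- A coherent set of desirable gambles K ⊆ ℝ^n is maximal (i.e., no coherent set of desirable gambles strictly contains K) if and only if there exists a unique matrix A ∈ ℝ^{n×n} with orthonormal rows and all columns lexicographically positive (A >_L 0_n) such that K = {g ∈ ℝ^n : Ag >_L 0_n}. -/
open Matrix BigOperators

theorem dm_lex_succ {n : ℕ} (x : Fin (n+1) → ℝ) :
    LexLt 0 x ↔ 0 < x 0 ∨ (x 0 = 0 ∧ LexLt 0 (fun i => x (Fin.succ i))) := by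
  constructor
  · rintro ⟨k, h1, h2⟩
    induction k using Fin.cases with
    | zero => left; simpa using h2
    | succ k =>
      right
      refine ⟨(h1 0 (Fin.succ_pos k)).symm, k, fun i hi => h1 _ (Fin.succ_lt_succ_iff.2 hi), h2⟩
  · rintro (h | ⟨h0, k, h1, h2⟩)
    · exact ⟨0, fun i hi => absurd hi (Fin.not_lt_zero i), h⟩
    · refine ⟨k.succ, ?_, h2⟩
      intro i hi
      induction i using Fin.cases with
      | zero => exact h0.symm
      | succ i => exact h1 i (Fin.succ_lt_succ_iff.1 hi)

theorem dm_lex_total : ∀ {n : ℕ} (x : Fin n → ℝ), x ≠ 0 → LexLt 0 x ∨ LexLt 0 (-x) := by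
  intro n
  induction n with
  | zero => intro x hx; exact absurd (Subsingleton.elim _ _) hx
  | succ n ih =>
    intro x hx
    rw [dm_lex_succ, dm_lex_succ]
    rcases lt_trichotomy (x 0) 0 with h | h | h
    · right; left; simpa using h
    · have : (fun i : Fin n => x i.succ) ≠ 0 := by
        intro h'
        apply hx
        funext i
        induction i using Fin.cases with
        | zero => exact h
        | succ i => exact congrFun h' i
      rcases ih _ this with h2 | h2
      · left; right; exact ⟨h, h2⟩
      · right; right; exact ⟨by simp [h], h2⟩
    · left; left; exact h

theorem dm_support {V : Type} [NormedAddCommGroup V] [InnerProductSpace ℝ V]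
    [FiniteDimensional ℝ V] [Nontrivial V] (C : Set V)
    (hadd : ∀ x ∈ C, ∀ y ∈ C, x + y ∈ C) (hsm : ∀ x ∈ C, ∀ l : ℝ, 0 < l → l • x ∈ C)
    (h0 : (0 : V) ∉ C) (htot : ∀ x : V, x ≠ 0 → x ∈ C ∨ -x ∈ C) :
    ∃ u : V, ‖u‖ = 1 ∧ ∀ g, 0 < inner ℝ u g → g ∈ C := by
  have hconv : Convex ℝ C := by
    rw [convex_iff_forall_pos]
    intro x hx y hy a b ha hb _
    exact hadd _ (hsm x hx a ha) _ (hsm y hy b hb)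
  have hne : C.Nonempty := by
    obtain ⟨x, hx⟩ := exists_ne (0 : V)
    rcases htot x hx with h | h
    exacts [⟨_, h⟩, ⟨_, h⟩]
  have hC : ∀ x ∈ C, x ∈ vectorSpan ℝ C := by
    intro x hx
    have h2 := hsm x hx 2 two_pos
    have := vsub_mem_vectorSpan ℝ h2 hx
    simpa [two_smul] using this
  have hvs : vectorSpan ℝ C = ⊤ := by
    rw [eq_top_iff]
    intro x _
    by_cases hx : x = 0
    · rw [hx]; exact Submodule.zero_mem _
    rcases htot x hx with h | h
    · exact hC x h
    · simpa using hC _ h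
  have hint : (interior C).Nonempty := by
    rw [hconv.interior_nonempty_iff_affineSpan_eq_top,
      AffineSubspace.affineSpan_eq_top_iff_vectorSpan_eq_top_of_nonempty _ _ _ hne]
    exact hvs
  obtain ⟨f, hf⟩ := geometric_hahn_banach_open_point hconv.interior isOpen_interior
    (fun h => h0 (interior_subset h))
  have hcl : ∀ x ∈ C, f x ≤ 0 := by
    intro x hx
    have h1 : x ∈ closure (interior C) := by
      rw [hconv.closure_interior_eq_closure_of_nonempty_interior hint]
      exact subset_closure hx
    have h2 : closure (interior C) ⊆ {y | f y ≤ 0} := by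
      apply closure_minimal
      · intro y hy
        have := hf y hy
        simp at this
        exact this.le
      · exact isClosed_le f.continuous continuous_const
    exact h2 h1
  set v := (InnerProductSpace.toDual ℝ V).symm f with hv
  have hvf : ∀ x, inner ℝ v x = f x := fun x => InnerProductSpace.toDual_symm_apply
  have hv0 : v ≠ 0 := by
    intro h
    obtain ⟨y, hy⟩ := hint
    have h1 := hf y hy
    rw [← hvf, ← hvf, h] at h1
    simp at h1
  have hn : 0 < ‖v‖ := norm_pos_iff.2 hv0
  refine ⟨-(‖v‖⁻¹ • v), ?_, ?_⟩
  · rw [norm_neg, norm_smul, norm_inv, norm_norm, inv_mul_cancel₀ hn.ne']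
  · intro g hg
    rw [inner_neg_left, real_inner_smul_left, hvf] at hg
    have hg' : f g < 0 := by
      by_contra h
      push Not at h
      have := mul_nonneg (inv_nonneg.2 hn.le) h
      linarith
    have hg0 : g ≠ 0 := by
      rintro rfl
      simp at hg'
    rcases htot g hg0 with h | h
    · exact h
    · have := hcl _ h
      rw [map_neg] at this
      linarith

theorem dm_basis : ∀ (n : ℕ) (V : Type) [NormedAddCommGroup V] [InnerProductSpace ℝ V]
    [FiniteDimensional ℝ V] (_ : Module.finrank ℝ V = n) (C : Set V)
    (_ : ∀ x ∈ C, ∀ y ∈ C, x + y ∈ C) (_ : ∀ x ∈ C, ∀ l : ℝ, 0 < l → l • x ∈ C)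
    (_ : (0 : V) ∉ C) (_ : ∀ x : V, x ≠ 0 → x ∈ C ∨ -x ∈ C),
    ∃ b : Fin n → V, (∀ i j, inner ℝ (b i) (b j) = if i = j then (1:ℝ) else 0) ∧
      ∀ g, g ∈ C ↔ LexLt 0 (fun i => inner ℝ (b i) g) := by
  intro n
  induction n with
  | zero =>
    intro V _ _ _ hV C _ _ h0 _
    have := Module.finrank_zero_iff.1 hV
    refine ⟨fun i => 0, fun i => i.elim0, fun g => ⟨fun h => ?_, ?_⟩⟩
    · rw [Subsingleton.elim g 0] at h
      exact absurd h h0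
    · rintro ⟨k, _⟩
      exact k.elim0
  | succ n ih =>
    intro V _ _ _ hV C hadd hsm h0 htot
    have : Nontrivial V := Module.nontrivial_of_finrank_pos (R := ℝ) (by omega)
    obtain ⟨u, hu, hC⟩ := dm_support C hadd hsm h0 htot
    have hu0 : u ≠ 0 := by
      rintro rfl
      simp at hu
    have : Fact (Module.finrank ℝ V = n + 1) := ⟨hV⟩
    obtain ⟨b, hb, hbC⟩ := ih (Submodule.span ℝ {u})ᗮ
      (Submodule.finrank_orthogonal_span_singleton hu0) (Subtype.val ⁻¹' C)
      (fun x hx y hy => hadd _ hx _ hy) (fun x hx l hl => hsm _ hx l hl) h0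
      (fun x hx => htot x (by simpa using hx))
    have hub : ∀ i, inner ℝ u (b i : V) = 0 := fun i =>
      Submodule.mem_orthogonal_singleton_iff_inner_right.1 (b i).2
    refine ⟨Fin.cons u (fun i => (b i : V)), ?_, ?_⟩
    · intro i j
      induction i using Fin.cases with
      | zero =>
        induction j using Fin.cases with
        | zero => simp [hu]
        | succ j => simp [hub, (Fin.succ_ne_zero j).symm]
      | succ i =>
        induction j using Fin.cases with
        | zero => simp [real_inner_comm, hub]
        | succ j => simpa using hb i j
    · intro g
      rw [dm_lex_succ]
      simp only [Fin.cons_zero, Fin.cons_succ]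
      rcases lt_trichotomy (inner ℝ u g) 0 with h | h | h
      · have h1 := hC (-g) (by rw [inner_neg_right]; linarith)
        constructor
        · intro hg
          exact absurd (by simpa using hadd _ hg _ h1) h0
        · rintro (h' | ⟨h', _⟩) <;> linarith
      · have hg := hbC ⟨g, Submodule.mem_orthogonal_singleton_iff_inner_right.2 h⟩
        simp only [Set.mem_preimage, Submodule.coe_inner] at hg
        rw [hg]
        simp [h]
      · exact ⟨fun _ => Or.inl h, fun _ => hC g h⟩

theorem dm_total {n : ℕ} (K : Set (Fin n → ℝ)) (hK : CohDesirable K)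
    (hmax : ∀ K' : Set (Fin n → ℝ), CohDesirable K' → ¬ K ⊂ K') :
    ∀ g : Fin n → ℝ, g ≠ 0 → g ∈ K ∨ -g ∈ K := by
  obtain ⟨a1, a2, a3, a4⟩ := hK
  intro g hg
  by_contra! hcon
  obtain ⟨hg1, hg2⟩ := hcon
  refine hmax {x | ∃ l : ℝ, 0 ≤ l ∧ (x - l • g ∈ K ∨ (0 < l ∧ x = l • g))} ⟨?_, ?_, ?_, ?_⟩ ?_
  · rintro x ⟨l, hl, hx⟩ y ⟨m, hm, hy⟩
    refine ⟨l + m, by positivity, ?_⟩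
    rcases hx with hx | ⟨hl', rfl⟩ <;> rcases hy with hy | ⟨hm', rfl⟩
    · left; convert a1 _ hx _ hy using 1; module
    · left; convert hx using 1; module
    · left; convert hy using 1; module
    · right; exact ⟨by positivity, by module⟩
  · rintro x ⟨l, hl, hx⟩ c hc
    refine ⟨c * l, by positivity, ?_⟩
    rcases hx with hx | ⟨hl', rfl⟩
    · left; convert a2 _ hx c hc using 1; module
    · right; exact ⟨by positivity, by module⟩
  · intro x hx hx0
    exact ⟨0, le_rfl, Or.inl (by simpa using a3 x hx hx0)⟩
  · rintro ⟨l, hl, hx | ⟨hl', hx⟩⟩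
    · rcases hl.eq_or_lt with rfl | hl'
      · exact a4 (by simpa using hx)
      · apply hg2
        convert a2 _ hx l⁻¹ (by positivity) using 1
        rw [zero_sub, smul_neg, smul_smul, inv_mul_cancel₀ hl'.ne', one_smul]
    · rcases smul_eq_zero.1 hx.symm with h | h
      · exact hl'.ne' h
      · exact hg h
  · refine (Set.ssubset_iff_of_subset ?_).2 ⟨g, ⟨1, zero_le_one, Or.inr ⟨one_pos, by simp⟩⟩, hg1⟩
    intro x hx
    exact ⟨0, le_rfl, Or.inl (by simpa using hx)⟩

theorem dm_unique {n : ℕ} (K : Set (Fin n → ℝ)) (hK : CohDesirable K)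
    (A B : Matrix (Fin n) (Fin n) ℝ) (hA : A * Aᵀ = 1) (hB : B * Bᵀ = 1)
    (hKA : K = {g : Fin n → ℝ | LexLt 0 (A.mulVec g)})
    (hKB : K = {g : Fin n → ℝ | LexLt 0 (B.mulVec g)}) : A = B := by
  obtain ⟨a1, a2, a3, a4⟩ := hK
  have dA : ∀ i j, A i ⬝ᵥ A j = if i = j then 1 else 0 := fun i j => by
    have := congrFun (congrFun hA i) j
    rw [Matrix.one_apply] at this
    exact this
  have dB : ∀ i j, B i ⬝ᵥ B j = if i = j then 1 else 0 := fun i j => by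
    have := congrFun (congrFun hB i) j
    rw [Matrix.one_apply] at this
    exact this
  suffices h : ∀ i, A i = B i from funext h
  intro i
  induction i using WellFoundedLT.induction with
  | ind i ih =>
  by_contra hne
  have hpos : 0 < (A i - B i) ⬝ᵥ (A i - B i) := by
    refine lt_of_le_of_ne (Finset.sum_nonneg fun j _ => mul_self_nonneg _) fun h => ?_
    exact hne (sub_eq_zero.1 (dotProduct_self_eq_zero.1 h.symm))
  have hc : A i ⬝ᵥ B i < 1 := by
    have e : (A i - B i) ⬝ᵥ (A i - B i) = 2 - 2 * (A i ⬝ᵥ B i) := by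
      rw [sub_dotProduct, dotProduct_sub, dotProduct_sub, dA, dB, dotProduct_comm (B i) (A i)]
      simp; ring
    linarith
  have h1 : A i - B i ∈ K := by
    rw [hKA]
    refine ⟨i, fun j hj => ?_, ?_⟩
    · change 0 = A j ⬝ᵥ (A i - B i)
      rw [dotProduct_sub, dA, ih j hj, dB, if_neg hj.ne]; simp
    · change 0 < A i ⬝ᵥ (A i - B i)
      rw [dotProduct_sub, dA, if_pos rfl]; linarith
  have h2 : B i - A i ∈ K := by
    rw [hKB]
    refine ⟨i, fun j hj => ?_, ?_⟩
    · change 0 = B j ⬝ᵥ (B i - A i)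
      rw [dotProduct_sub, dB, ← ih j hj, dA, if_neg hj.ne]; simp
    · change 0 < B i ⬝ᵥ (B i - A i)
      rw [dotProduct_sub, dB, if_pos rfl, dotProduct_comm]; linarith
  exact a4 (by simpa using a1 _ h1 _ h2)

theorem dm_exists {n : ℕ} (K : Set (Fin n → ℝ)) (hK : CohDesirable K)
    (htot : ∀ g : Fin n → ℝ, g ≠ 0 → g ∈ K ∨ -g ∈ K) :
    ∃ A : Matrix (Fin n) (Fin n) ℝ, A * Aᵀ = 1 ∧ ColsLexPos A ∧
        K = {g : Fin n → ℝ | LexLt 0 (A.mulVec g)} := by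
  obtain ⟨a1, a2, a3, a4⟩ := hK
  obtain ⟨b, hb, hC⟩ := dm_basis n (EuclideanSpace ℝ (Fin n)) (by simp)
    {x | x.ofLp ∈ K} (fun x hx y hy => a1 _ hx _ hy) (fun x hx l hl => a2 _ hx l hl) a4
    (fun x hx => htot x.ofLp (by simpa using hx))
  have hK : K = {g : Fin n → ℝ | LexLt 0 ((Matrix.of fun i j => b i j).mulVec g)} := by
    ext g
    have := hC (WithLp.toLp 2 g)
    simp only [Set.mem_setOf_eq] at this ⊢
    rw [this]
    congr! 1
    funext i
    simp [PiLp.inner_apply, Matrix.mulVec, dotProduct, mul_comm]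
  refine ⟨_, ?_, ?_, hK⟩
  · ext i j
    have := hb i j
    rw [Matrix.one_apply, ← this]
    simp [PiLp.inner_apply, Matrix.mul_apply, mul_comm]
  · intro j
    have h1 : Pi.single j (1:ℝ) ∈ K := by
      refine a3 _ (fun i => ?_) (by simp)
      by_cases h : i = j
      · subst h; simp
      · simp [h]
    rw [hK] at h1
    simp only [Set.mem_setOf_eq, Matrix.mulVec_single_one] at h1
    exact h1

/-- A coherent set of desirable gambles is maximal iff it is the semispace determined by a
unique orthonormal matrix with lexicographically positive columns. -/
theorem desirable_maximal_iff {n : ℕ} (K : Set (Fin n → ℝ)) (hK : CohDesirable K) :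
    (∀ K' : Set (Fin n → ℝ), CohDesirable K' → ¬ K ⊂ K') ↔
      ∃! A : Matrix (Fin n) (Fin n) ℝ, A * Aᵀ = 1 ∧ ColsLexPos A ∧
        K = {g : Fin n → ℝ | LexLt 0 (A.mulVec g)} := by
  constructor
  · intro hmax
    obtain ⟨A, h1, h2, h3⟩ := dm_exists K hK (dm_total K hK hmax)
    exact ⟨A, ⟨h1, h2, h3⟩, fun B hB => dm_unique K hK B A hB.1 h1 hB.2.2 h3⟩
  · rintro ⟨A, ⟨h1, -, h3⟩, -⟩ K' ⟨b1, -, -, b4⟩ hss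
    obtain ⟨g, hg', hg⟩ := Set.exists_of_ssubset hss
    have hg0 : g ≠ 0 := by
      rintro rfl
      exact b4 hg'
    have hAg : A.mulVec g ≠ 0 := by
      intro h
      apply hg0
      have h2 := mul_eq_one_comm.1 h1
      rw [← Matrix.one_mulVec g, ← h2, ← Matrix.mulVec_mulVec, h, Matrix.mulVec_zero]
    have hn : -g ∈ K := by
      rcases dm_lex_total _ hAg with h | h
      · exact absurd (by rw [h3]; exact h) hg
      · rw [h3]
        simpa [Matrix.mulVec_neg] using h
    exact b4 (by simpa using b1 _ hg' _ (hss.1 hn))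
end

section
/- Every coherent set of desirable gambles K ⊆ ℝ^n equals the intersection of all maximal coherent sets of desirable gambles that contain it: K = ⋂{K' : K' is a maximal coherent set of desirable gambles and K ⊆ K'}. -/
open Matrix BigOperators

theorem CohDesirable.exists_max {n : ℕ} (K : Set (Fin n → ℝ)) (hK : CohDesirable K) :
    ∃ M : Set (Fin n → ℝ), K ⊆ M ∧ CohDesirable M ∧
      ∀ K'' : Set (Fin n → ℝ), CohDesirable K'' → ¬ M ⊂ K'' := by
  obtain ⟨M, hKM, hM⟩ := zorn_subset_nonempty {M : Set (Fin n → ℝ) | CohDesirable M} (by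
    intro c hc hchain hne
    refine ⟨⋃₀ c, ⟨?_, ?_, ?_, ?_⟩, fun s hs => Set.subset_sUnion_of_mem hs⟩
    · rintro g ⟨s, hs, hg⟩ f ⟨t, ht, hf⟩
      rcases hchain.total hs ht with h | h
      · exact ⟨t, ht, (hc ht).1 g (h hg) f hf⟩
      · exact ⟨s, hs, (hc hs).1 g hg f (h hf)⟩
    · rintro g ⟨s, hs, hg⟩ l hl
      exact ⟨s, hs, (hc hs).2.1 g hg l hl⟩
    · intro g h0 h1
      obtain ⟨s, hs⟩ := hne
      exact ⟨s, hs, (hc hs).2.2.1 g h0 h1⟩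
    · rintro ⟨s, hs, h⟩
      exact (hc hs).2.2.2 h) K hK
  refine ⟨M, hKM, hM.prop, fun K'' h hlt => hlt.2 (hM.le_of_ge h hlt.1)⟩

theorem CohDesirable.extend {n : ℕ} (K : Set (Fin n → ℝ)) (hK : CohDesirable K)
    (f : Fin n → ℝ) (hf : f ∉ K) (hf0 : f ≠ 0) :
    ∃ M : Set (Fin n → ℝ), K ⊆ M ∧ CohDesirable M ∧ -f ∈ M := by
  obtain ⟨h1, h2, h3, h4⟩ := hK
  refine ⟨{g | (∃ l : ℝ, 0 ≤ l ∧ g + l • f ∈ K) ∨ ∃ l : ℝ, 0 < l ∧ g + l • f = 0},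
    fun g hg => Or.inl ⟨0, le_rfl, by simpa using hg⟩, ⟨?_, ?_, ?_, ?_⟩,
    Or.inr ⟨1, one_pos, by simp⟩⟩
  · intro g hg h hh
    have e : ∀ a b : ℝ, g + h + (a + b) • f = (g + a • f) + (h + b • f) := by
      intro a b; module
    rcases hg with ⟨a, ha, hg⟩ | ⟨a, ha, hg⟩ <;> rcases hh with ⟨b, hb, hh⟩ | ⟨b, hb, hh⟩
    · exact Or.inl ⟨a + b, by positivity, by rw [e]; exact h1 _ hg _ hh⟩
    · exact Or.inl ⟨a + b, by positivity, by rw [e, hh, add_zero]; exact hg⟩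
    · exact Or.inl ⟨a + b, by positivity, by rw [e, hg, zero_add]; exact hh⟩
    · exact Or.inr ⟨a + b, by positivity, by rw [e, hg, hh, add_zero]⟩
  · intro g hg l hl
    have e : ∀ a : ℝ, l • g + (l * a) • f = l • (g + a • f) := by
      intro a; module
    rcases hg with ⟨a, ha, hg⟩ | ⟨a, ha, hg⟩
    · exact Or.inl ⟨l * a, by positivity, by rw [e]; exact h2 _ hg l hl⟩
    · exact Or.inr ⟨l * a, by positivity, by rw [e, hg, smul_zero]⟩
  · intro g hg hg0
    exact Or.inl ⟨0, le_rfl, by simpa using h3 g hg hg0⟩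
  · rintro (⟨a, ha, h⟩ | ⟨a, ha, h⟩)
    · rw [zero_add] at h
      rcases ha.eq_or_lt with rfl | ha
      · rw [zero_smul] at h
        exact h4 h
      · have := h2 _ h a⁻¹ (by positivity)
        rw [smul_smul, inv_mul_cancel₀ ha.ne', one_smul] at this
        exact hf this
    · rw [zero_add] at h
      exact (smul_ne_zero ha.ne' hf0) h

/-- Every coherent set of desirable gambles is the intersection of the maximal coherent
sets of desirable gambles containing it. -/
theorem desirable_eq_iInter_maximal {n : ℕ} (K : Set (Fin n → ℝ)) (hK : CohDesirable K) :
    K = ⋂₀ {K' : Set (Fin n → ℝ) |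
      (CohDesirable K' ∧ ∀ K'' : Set (Fin n → ℝ), CohDesirable K'' → ¬ K' ⊂ K'') ∧
      K ⊆ K'} := by
  apply Set.Subset.antisymm
  · intro g hg M hM
    exact hM.2 hg
  · intro f hf
    by_contra hfK
    by_cases hf0 : f = 0
    · obtain ⟨M, hKM, hM, hmax⟩ := CohDesirable.exists_max K hK
      have := hf M ⟨⟨hM, hmax⟩, hKM⟩
      rw [hf0] at this
      exact hM.2.2.2 this
    · obtain ⟨L, hKL, hL, hfL⟩ := CohDesirable.extend K hK f hfK hf0
      obtain ⟨M, hLM, hM, hmax⟩ := CohDesirable.exists_max L hL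
      have h := hM.1 _ (hf M ⟨⟨hM, hmax⟩, hKL.trans hLM⟩) _ (hLM hfL)
      rw [add_neg_cancel] at h
      exact hM.2.2.2 h
end

section
/- Let H := {g ∈ ℝ^n : g > 0_n} (the nonzero nonnegative vectors) and B := {A ∈ ℝ^{n×n} : A >_L 0_n} (the matrices all of whose columns are lexicographically positive). Then H^⧫ = B and B^◊ = H, where H^⧫ := {A ∈ ℝ^{n×n} : Ag >_L 0_n for all g ∈ H} and B^◊ := {g ∈ ℝ^n : Ag >_L 0_n for all A ∈ B}. -/
open Matrix BigOperators

/-- `K^⧫`: the matrices mapping every element of `K` to a lexicographically positive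
vector. -/
def matPolar {n : ℕ} (K : Set (Fin n → ℝ)) : Set (Matrix (Fin n) (Fin n) ℝ) :=
  {A | ∀ g ∈ K, LexLt 0 (A.mulVec g)}

/-- `𝒜^◊`: the vectors mapped by every matrix of `𝒜` to a lexicographically positive
vector. -/
def vecPolar {n : ℕ} (S : Set (Matrix (Fin n) (Fin n) ℝ)) : Set (Fin n → ℝ) :=
  {g | ∀ A ∈ S, LexLt 0 (A.mulVec g)}

theorem aux_pos {n : ℕ} (A : Matrix (Fin n) (Fin n) ℝ) (hA : ColsLexPos A)
    (g : Fin n → ℝ) (hg : ∀ i, 0 ≤ g i) (h0 : g ≠ 0) : LexLt 0 (A.mulVec g) := by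
  choose k hk hk' using hA
  obtain ⟨j1, hj1⟩ := Function.ne_iff.mp h0
  have hne : (Finset.univ.filter (fun j => g j ≠ 0)).Nonempty :=
    ⟨j1, by simpa using hj1⟩
  obtain ⟨j0, hj0, hmin⟩ := Finset.exists_min_image _ k hne
  simp only [Finset.mem_filter, Finset.mem_univ, true_and] at hj0 hmin
  refine ⟨k j0, ?_, ?_⟩
  · intro i hi
    simp only [Matrix.mulVec, dotProduct, Pi.zero_apply]
    symm
    apply Finset.sum_eq_zero
    intro j _
    by_cases h : g j = 0
    · simp [h]
    · have := hk j i (lt_of_lt_of_le hi (hmin j h))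
      simp only [Pi.zero_apply] at this
      simp [← this]
  · simp only [Matrix.mulVec, dotProduct, Pi.zero_apply]
    apply Finset.sum_pos'
    · intro j _
      by_cases h : g j = 0
      · simp [h]
      · apply mul_nonneg _ (hg j)
        rcases (hmin j h).lt_or_eq with h1 | h1
        · exact (hk j _ h1).le
        · rw [h1]; exact (hk' j).le
    · exact ⟨j0, Finset.mem_univ _,
        mul_pos (hk' j0) (lt_of_le_of_ne (hg j0) (Ne.symm hj0))⟩

theorem aux_row {n : ℕ} (g : Fin n → ℝ)
    (hg : ∀ A : Matrix (Fin n) (Fin n) ℝ, ColsLexPos A → LexLt 0 (A.mulVec g))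
    (w : Fin n → ℝ) (hw : ∀ i, 0 < w i) : 0 < ∑ j, w j * g j := by
  have hA : ColsLexPos (Matrix.of (fun i j : Fin n => if i.val = 0 then w j else 0)) := by
    intro j
    refine ⟨⟨0, j.pos⟩, ?_, ?_⟩
    · intro i hi
      exact absurd (Fin.lt_def.mp hi) (Nat.not_lt_zero _)
    · simpa using hw j
  obtain ⟨k, _, hk⟩ := hg _ hA
  simp only [Matrix.mulVec, dotProduct, Pi.zero_apply, Matrix.of_apply] at hk
  by_cases h : k.val = 0
  · simpa [h] using hk
  · simp [h] at hk

/-- The polar of the cone of nonzero nonnegative gambles is the set of matrices with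
lexicographically positive columns, and vice versa. -/
theorem polar_posOrthant_eq {n : ℕ} :
    matPolar {g : Fin n → ℝ | (∀ i, 0 ≤ g i) ∧ g ≠ 0} =
        {A : Matrix (Fin n) (Fin n) ℝ | ColsLexPos A} ∧
    vecPolar {A : Matrix (Fin n) (Fin n) ℝ | ColsLexPos A} =
        {g : Fin n → ℝ | (∀ i, 0 ≤ g i) ∧ g ≠ 0} := by
  constructor
  · ext A
    constructor
    · intro h j
      have := h (Pi.single j 1) ⟨fun i => by
        by_cases hij : i = j
        · subst hij; simp
        · simp [hij], by simp⟩
      rw [Matrix.mulVec_single_one] at this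
      exact this
    · intro h g hg
      exact aux_pos A h g hg.1 hg.2
  · ext g
    constructor
    · intro h
      have key := aux_row g h
      refine ⟨?_, ?_⟩
      · intro i
        by_contra hi
        push Not at hi
        set M : ℝ := |∑ j, g j| / (-g i) with hM
        have hM0 : 0 ≤ M := div_nonneg (abs_nonneg _) (by linarith)
        have h1 := key (fun j => 1 + if j = i then M else 0) (fun j => by
          split_ifs <;> linarith)
        have h2 : M * g i = -|∑ j, g j| := by
          rw [hM]
          have h3 : g i ≠ 0 := hi.ne
          field_simp
        simp only [add_mul, one_mul, Finset.sum_add_distrib, ite_mul, zero_mul,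
          Finset.sum_ite_eq', Finset.mem_univ, if_true, h2] at h1
        linarith [le_abs_self (∑ j, g j)]
      · rintro rfl
        have := key (fun _ => 1) (fun _ => one_pos)
        simp at this
    · intro hg A hA
      exact aux_pos A hA g hg.1 hg.2
end

section
/- Let A ∈ ℝ^{n×n} have orthonormal rows (A Aᵀ = I) and all columns lexicographically positive (A >_L 0_n). Then there exists a full-rank row-stochastic matrix P ∈ ℝ^{n×n} (each row of P is a probability mass function and P is invertible) such that P^◊ = A^◊, where M^◊ := {g ∈ ℝ^n : Mg >_L 0_n} for a matrix M. -/
open Matrix BigOperators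

/-- `M^◊` for a single matrix: the gambles mapped to a lexicographically positive
vector. -/
def matDiamond {n : ℕ} (M : Matrix (Fin n) (Fin n) ℝ) : Set (Fin n → ℝ) :=
  {g | LexLt 0 (M.mulVec g)}

/-- A row-stochastic matrix: every row is a probability mass function. -/
def RowStochastic {n : ℕ} (P : Matrix (Fin n) (Fin n) ℝ) : Prop :=
  (∀ i j : Fin n, 0 ≤ P i j) ∧ ∀ i : Fin n, ∑ j, P i j = 1

theorem tri_mulVec {n : ℕ} (L : Matrix (Fin n) (Fin n) ℝ) (hL : ∀ i k, i < k → L i k = 0)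
    (v : Fin n → ℝ) (i : Fin n) (hv : ∀ j, j < i → v j = 0) :
    L.mulVec v i = L i i * v i := by
  unfold Matrix.mulVec dotProduct
  apply Finset.sum_eq_single_of_mem i (Finset.mem_univ _)
  intro k _ hk
  rcases lt_or_gt_of_ne hk with h | h
  · rw [hv k h, mul_zero]
  · show L i k * v k = 0
    rw [hL i k h, zero_mul]

theorem tri_lex {n : ℕ} (L : Matrix (Fin n) (Fin n) ℝ) (hL : ∀ i k, i < k → L i k = 0)
    (hd : ∀ i, 0 < L i i) (v : Fin n → ℝ) : LexLt 0 (L.mulVec v) ↔ LexLt 0 v := by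
  constructor
  · rintro ⟨k, h1, h2⟩
    have key : ∀ m : ℕ, ∀ i : Fin n, i.val = m → i < k → v i = 0 := by
      intro m
      induction m using Nat.strong_induction_on with
      | _ m ih =>
        intro i him hik
        have h := tri_mulVec L hL v i (fun j hj => ih j.val (him ▸ hj) j rfl (hj.trans hik))
        rw [← h1 i hik] at h
        rcases mul_eq_zero.mp h.symm with h' | h'
        · exact absurd h' (hd i).ne'
        · exact h'
    refine ⟨k, fun i hi => (key _ i rfl hi).symm, ?_⟩
    rw [tri_mulVec L hL v k (fun j hj => key _ j rfl hj)] at h2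
    exact (mul_pos_iff_of_pos_left (hd k)).mp h2
  · rintro ⟨k, h1, h2⟩
    refine ⟨k, fun i hi => ?_, ?_⟩
    · rw [tri_mulVec L hL v i (fun j hj => (h1 j (hj.trans hi)).symm), ← h1 i hi]; simp
    · rw [tri_mulVec L hL v k (fun j hj => (h1 j hj).symm)]
      exact mul_pos (hd k) h2

theorem tri_det {n : ℕ} (L : Matrix (Fin n) (Fin n) ℝ) (hL : ∀ i k, i < k → L i k = 0)
    (hd : ∀ i, 0 < L i i) : L.det ≠ 0 := by
  rw [Matrix.det_of_isLowerTriangular L (fun i j h => hL i j h)]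
  exact (Finset.prod_pos fun i _ => hd i).ne'

theorem ev_nonneg {n : ℕ} (a : Fin n → ℝ) (ha : LexLt 0 a) (i : Fin n) :
    ∀ᶠ e : ℝ in nhdsWithin 0 (Set.Ioi 0), 0 ≤ ∑ k, (if k ≤ i then e ^ (k : ℕ) else 0) * a k := by
  obtain ⟨k0, h1, h2⟩ := ha
  simp only [Pi.zero_apply] at h1 h2
  by_cases hi : i < k0
  · refine Filter.Eventually.of_forall fun e => le_of_eq ?_
    symm
    apply Finset.sum_eq_zero
    intro k _
    split_ifs with h
    · rw [← h1 k (h.trans_lt hi), mul_zero]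
    · simp
  · have hi' : k0 ≤ i := not_lt.mp hi
    let F : ℝ → ℝ := fun e => ∑ k : Fin n, (if k ≤ i then e ^ ((k : ℕ) - (k0 : ℕ)) else 0) * a k
    have hF : Continuous F := by
      refine continuous_finset_sum _ fun k _ => ?_
      split_ifs <;> fun_prop
    have hF0 : F 0 = a k0 := by
      show ∑ k : Fin n, _ = _
      rw [Finset.sum_eq_single_of_mem k0 (Finset.mem_univ _)]
      · simp [hi']
      · intro k _ hk
        rcases lt_or_gt_of_ne hk with h | h
        · rw [← h1 k h, mul_zero]
        · have : (k : ℕ) - (k0 : ℕ) ≠ 0 := by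
            have : (k0 : ℕ) < k := h
            omega
          simp [this]
    have hev : ∀ᶠ e in nhds (0 : ℝ), 0 < F e :=
      hF.continuousAt.eventually (lt_mem_nhds (by rw [hF0]; exact h2))
    filter_upwards [nhdsWithin_le_nhds hev, self_mem_nhdsWithin] with e he hpos
    have hpos' : 0 < e := hpos
    have : ∑ k, (if k ≤ i then e ^ (k : ℕ) else 0) * a k = e ^ (k0 : ℕ) * F e := by
      show _ = _ * ∑ k : Fin n, _
      rw [Finset.mul_sum]
      refine Finset.sum_congr rfl fun k _ => ?_
      rcases lt_or_ge k k0 with h | h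
      · rw [← h1 k h]; simp
      · split_ifs with hk
        · rw [← mul_assoc, ← pow_add]
          have : (k0 : ℕ) ≤ k := h
          congr 2; omega
        · simp
    rw [this]
    exact (mul_pos (pow_pos hpos' _) he).le

/-- Every orthonormal matrix with lexicographically positive columns determines the same
semispace as some full-rank row-stochastic matrix. -/
theorem exists_stochastic_same_polar {n : ℕ} (A : Matrix (Fin n) (Fin n) ℝ)
    (hA : A * Aᵀ = 1) (hpos : ColsLexPos A) :
    ∃ P : Matrix (Fin n) (Fin n) ℝ, RowStochastic P ∧ IsUnit P.det ∧
      matDiamond P = matDiamond A := by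
  have hdetA : A.det ≠ 0 := by
    have := congrArg Matrix.det hA
    rw [Matrix.det_mul, Matrix.det_one] at this
    exact left_ne_zero_of_mul (this ▸ one_ne_zero)
  have hev : ∀ᶠ e : ℝ in nhdsWithin 0 (Set.Ioi 0), ∀ i j : Fin n,
      0 ≤ ∑ k, (if k ≤ i then e ^ (k : ℕ) else 0) * A k j := by
    rw [Filter.eventually_all]; intro i
    rw [Filter.eventually_all]; intro j
    exact ev_nonneg _ (hpos j) i
  obtain ⟨e, he, he0⟩ := (hev.and self_mem_nhdsWithin).exists
  have he0' : 0 < e := he0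
  let L : Matrix (Fin n) (Fin n) ℝ := Matrix.of fun i k => if k ≤ i then e ^ (k : ℕ) else 0
  have hL : ∀ i k, i < k → L i k = 0 := fun i k h => by simp [L, h]
  have hd : ∀ i, 0 < L i i := fun i => by simpa [L] using pow_pos he0' _
  have hQ : ∀ i j, 0 ≤ (L * A) i j := fun i j => by
    rw [Matrix.mul_apply]; exact he i j
  have hQdet : (L * A).det ≠ 0 := by
    rw [Matrix.det_mul]; exact mul_ne_zero (tri_det L hL hd) hdetA
  have hs : ∀ i, 0 < ∑ j, (L * A) i j := by
    intro i
    refine lt_of_le_of_ne (Finset.sum_nonneg fun j _ => hQ i j) fun h => hQdet ?_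
    have h0 := (Finset.sum_eq_zero_iff_of_nonneg (fun j _ => hQ i j)).mp h.symm
    exact Matrix.det_eq_zero_of_row_eq_zero i fun j => h0 j (Finset.mem_univ _)
  let D : Matrix (Fin n) (Fin n) ℝ := Matrix.diagonal fun i => (∑ j, (L * A) i j)⁻¹
  have hL' : ∀ i k, i < k → (D * L) i k = 0 := fun i k h => by
    simp only [D, Matrix.diagonal_mul, hL i k h, mul_zero]
  have hd' : ∀ i, 0 < (D * L) i i := fun i => by
    simp only [D, Matrix.diagonal_mul]
    exact mul_pos (inv_pos.mpr (hs i)) (hd i)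
  have hP : ∀ i j, (D * L * A) i j = (∑ j, (L * A) i j)⁻¹ * (L * A) i j := fun i j => by
    rw [Matrix.mul_assoc]; simp only [D, Matrix.diagonal_mul]
  refine ⟨D * L * A, ⟨fun i j => ?_, fun i => ?_⟩, ?_, ?_⟩
  · rw [hP]; exact mul_nonneg (inv_pos.mpr (hs i)).le (hQ i j)
  · simp only [hP]
    rw [← Finset.mul_sum]
    exact inv_mul_cancel₀ (hs i).ne'
  · rw [Matrix.det_mul, isUnit_iff_ne_zero]
    exact mul_ne_zero (tri_det _ hL' hd') hdetA
  · ext g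
    show LexLt 0 _ ↔ LexLt 0 _
    rw [← Matrix.mulVec_mulVec]
    exact tri_lex _ hL' hd' _
end

section
/- Let P ∈ ℝ^{n×n} be a full-rank row-stochastic matrix. Then there exists a matrix A ∈ ℝ^{n×n} with orthonormal rows (A Aᵀ = I) and all columns lexicographically positive (A >_L 0_n) such that A^◊ = P^◊, where M^◊ := {g ∈ ℝ^n : Mg >_L 0_n} for a matrix M. -/
open Matrix BigOperators

lemma lexLt_lower_iff {n : ℕ} (C : Matrix (Fin n) (Fin n) ℝ)
    (hC : ∀ i j, i < j → C i j = 0) (hd : ∀ i, 0 < C i i) (v : Fin n → ℝ) :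
    LexLt 0 (C.mulVec v) ↔ LexLt 0 v := by
  have key : ∀ k, (∀ i < k, v i = 0) → C.mulVec v k = C k k * v k := by
    intro k hk
    simp only [Matrix.mulVec, dotProduct]
    refine Finset.sum_eq_single k ?_ (by simp)
    intro j _ hj
    rcases lt_or_gt_of_ne hj with h | h
    · rw [hk j h, mul_zero]
    · rw [hC k j h, zero_mul]
  constructor
  · rintro ⟨k, hk, hpos⟩
    have hv : ∀ i, i < k → v i = 0 := by
      intro i
      induction i using WellFoundedLT.induction with
      | ind i ih =>
        intro hik
        have h1 := key i (fun j hj => ih j hj (hj.trans hik))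
        have h2 := hk i hik
        rw [h1] at h2
        have h3 := hd i
        simp only [Pi.zero_apply] at h2
        rcases mul_eq_zero.mp h2.symm with h | h
        · exact absurd h h3.ne'
        · exact h
    refine ⟨k, fun i hi => (hv i hi).symm, ?_⟩
    rw [key k hv] at hpos
    exact (mul_pos_iff_of_pos_left (hd k)).mp hpos
  · rintro ⟨k, hk, hpos⟩
    refine ⟨k, fun i hi => ?_, ?_⟩
    · rw [key i (fun j hj => (hk j (hj.trans hi)).symm), ← hk i hi]
      simp
    · rw [key k (fun j hj => (hk j hj).symm)]
      exact mul_pos (hd k) hpos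

lemma lexLt_of_nonneg {n : ℕ} (v : Fin n → ℝ) (h : ∀ i, 0 ≤ v i) (h0 : v ≠ 0) :
    LexLt 0 v := by
  obtain ⟨i, hi⟩ := Function.ne_iff.mp h0
  have hw := WellFounded.has_min (wellFounded_lt (α := Fin n)) {i | v i ≠ 0} ⟨i, hi⟩
  obtain ⟨k, hk, hmin⟩ := hw
  refine ⟨k, fun j hj => ?_, lt_of_le_of_ne (h k) (Ne.symm hk)⟩
  by_contra hne
  exact hmin j (fun h => hne (by simp [h])) hj

open InnerProductSpace in
lemma exists_lower_orth {n : ℕ} (P : Matrix (Fin n) (Fin n) ℝ) (hfull : IsUnit P.det) :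
    ∃ A C : Matrix (Fin n) (Fin n) ℝ, A * Aᵀ = 1 ∧ P = C * A ∧
      (∀ i j, i < j → C i j = 0) ∧ ∀ i, 0 < C i i := by
  let f : Fin n → EuclideanSpace ℝ (Fin n) := fun i => WithLp.toLp 2 (P i)
  have hf : LinearIndependent ℝ f := by
    have h := Matrix.linearIndependent_rows_of_isUnit ((Matrix.isUnit_iff_isUnit_det P).mpr hfull)
    exact h.map' (WithLp.linearEquiv 2 ℝ (Fin n → ℝ)).symm.toLinearMap
      (LinearEquiv.ker _)
  have hcard : Module.finrank ℝ (EuclideanSpace ℝ (Fin n)) = Fintype.card (Fin n) := by simp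
  let b := gramSchmidtOrthonormalBasis hcard f
  let A : Matrix (Fin n) (Fin n) ℝ := Matrix.of fun i j => b i j
  have hin : ∀ x y : EuclideanSpace ℝ (Fin n), inner ℝ x y = ∑ j, y j * x j := by
    intro x y; simp [PiLp.inner_apply]
  have hA : A * Aᵀ = 1 := by
    ext i j
    have := orthonormal_iff_ite.mp b.orthonormal j i
    rw [hin] at this
    simp only [Matrix.mul_apply, Matrix.transpose_apply, A, Matrix.of_apply, this, Matrix.one_apply,
      eq_comm]
  have hC : ∀ i j, (P * Aᵀ) i j = inner ℝ (b j) (f i) := by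
    intro i j
    rw [hin]
    simp [Matrix.mul_apply, A, f]
  refine ⟨A, P * Aᵀ, hA, ?_, ?_, ?_⟩
  · rw [Matrix.mul_assoc, mul_eq_one_comm.mp hA, Matrix.mul_one]
  · intro i j hij
    rw [hC]
    exact gramSchmidtOrthonormalBasis_inv_triangular hcard f hij
  · intro i
    rw [hC]
    have h0 : gramSchmidt ℝ f i ≠ 0 := gramSchmidt_ne_zero i hf
    have hn : 0 < ‖gramSchmidt ℝ f i‖ := norm_pos_iff.mpr h0
    have h1 : gramSchmidtNormed ℝ f i ≠ 0 := by
      simp [gramSchmidtNormed, h0]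
    have h2 : inner ℝ (gramSchmidt ℝ f i) (f i) = ‖gramSchmidt ℝ f i‖ ^ 2 := by
      conv_lhs => rw [gramSchmidt_def'' ℝ f i]
      rw [inner_add_right, inner_sum, Finset.sum_eq_zero, add_zero,
        real_inner_self_eq_norm_sq]
      intro k hk
      rw [inner_smul_right, gramSchmidt_orthogonal ℝ f (Finset.mem_Iio.mp hk).ne', mul_zero]
    have h3 : b i = gramSchmidtNormed ℝ f i := gramSchmidtOrthonormalBasis_apply hcard h1
    rw [h3, gramSchmidtNormed, real_inner_smul_left, h2]
    simp only [RCLike.ofReal_real_eq_id, id]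
    positivity

/-- Every full-rank row-stochastic matrix determines the same semispace as some
orthonormal matrix with lexicographically positive columns. -/
theorem exists_orthonormal_same_polar {n : ℕ} (P : Matrix (Fin n) (Fin n) ℝ)
    (hP : RowStochastic P) (hfull : IsUnit P.det) :
    ∃ A : Matrix (Fin n) (Fin n) ℝ, A * Aᵀ = 1 ∧ ColsLexPos A ∧
      matDiamond A = matDiamond P := by
  obtain ⟨A, C, hA, hPC, hC, hd⟩ := exists_lower_orth P hfull
  have hdia : ∀ v, LexLt 0 (P.mulVec v) ↔ LexLt 0 (A.mulVec v) := by
    intro v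
    rw [hPC, ← Matrix.mulVec_mulVec]
    exact lexLt_lower_iff C hC hd _
  refine ⟨A, hA, ?_, ?_⟩
  · intro j
    have h := (hdia (Pi.single j 1)).mp ?_
    · rw [Matrix.mulVec_single_one] at h
      exact h
    · apply lexLt_of_nonneg
      · intro i
        rw [Matrix.mulVec_single_one]
        exact hP.1 i j
      · intro h0
        have := Matrix.mulVec_injective_of_isUnit ((Matrix.isUnit_iff_isUnit_det P).mpr hfull)
          (h0.trans (Matrix.mulVec_zero P).symm)
        have := congrFun this j
        simp at this
  · ext g
    exact (hdia g).symm
end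

section
/- The map G defined by G(K) := K^⧫ ∩ T_{n,n}, where K^⧫ := {A ∈ ℝ^{n×n} : Ag >_L 0_n for all g ∈ K} and T_{n,n} is the set of full-rank row-stochastic n×n matrices, is a bijection from the family of coherent sets of desirable gambles in ℝ^n onto the family of L-credal sets, and its inverse is given by G⁻¹(𝒫) = 𝒫^◊ := {g ∈ ℝ^n : Ag >_L 0_n for all A ∈ 𝒫}. -/
open Matrix BigOperators

/-- `T_{n,n}`: the full-rank row-stochastic `n × n` matrices. -/
def fullRankStochastic (n : ℕ) : Set (Matrix (Fin n) (Fin n) ℝ) :=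
  {P | RowStochastic P ∧ IsUnit P.det}

/-- An `L`-convex cone (omitting its apex) of matrices. -/
def LConvexCone {n : ℕ} (S : Set (Matrix (Fin n) (Fin n) ℝ)) : Prop :=
  ∃ (T : Type) (g : T → Fin n → ℝ),
    S = {A : Matrix (Fin n) (Fin n) ℝ | ∀ t : T, LexLt 0 (A.mulVec (g t))}

/-- An `L`-credal set: a nonempty intersection of an `L`-convex cone with `T_{n,n}`. -/
def LCredal {n : ℕ} (P : Set (Matrix (Fin n) (Fin n) ℝ)) : Prop :=
  P.Nonempty ∧ ∃ S : Set (Matrix (Fin n) (Fin n) ℝ), LConvexCone S ∧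
    P = S ∩ fullRankStochastic n

lemma aux_sep_s19 {V : Type} [NormedAddCommGroup V] [NormedSpace ℝ V] [FiniteDimensional ℝ V]
    [Nontrivial V] (K : Set V) (h1 : ∀ g ∈ K, ∀ f ∈ K, g + f ∈ K)
    (h2 : ∀ g ∈ K, ∀ l : ℝ, 0 < l → l • g ∈ K) (h0 : (0 : V) ∉ K) :
    ∃ φ : V →ₗ[ℝ] ℝ, φ ≠ 0 ∧ ∀ g ∈ K, 0 ≤ φ g := by
  by_cases hs : Submodule.span ℝ K = ⊤
  · have hne : K.Nonempty := by
      rw [Set.nonempty_iff_ne_empty]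
      rintro rfl
      simp at hs
    have hconv : Convex ℝ K := by
      rw [convex_iff_forall_pos]
      intro x hx y hy a b ha hb _
      exact h1 _ (h2 x hx a ha) _ (h2 y hy b hb)
    have hz : (0 : V) ∈ affineSpan ℝ K := by
      obtain ⟨g, hg⟩ := hne
      have h := AffineMap.lineMap_mem (Q := affineSpan ℝ K) (-1 : ℝ)
        (subset_affineSpan ℝ K hg) (subset_affineSpan ℝ K (h2 g hg 2 (by norm_num)))
      convert h using 1
      rw [AffineMap.lineMap_apply]
      simp [two_smul]
    have haff : affineSpan ℝ K = ⊤ := by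
      rw [← affineSpan_insert_eq_affineSpan ℝ hz]
      apply SetLike.coe_injective
      rw [affineSpan_insert_zero, hs]
      simp
    have hint := (hconv.interior_nonempty_iff_affineSpan_eq_top).2 haff
    obtain ⟨f, hf, hfK⟩ := geometric_hahn_banach_of_nonempty_interior_point hconv
      (fun h => h0 (interior_subset h)) hint
    refine ⟨-(f : V →ₗ[ℝ] ℝ), ?_, ?_⟩
    · intro h
      apply hf
      ext x
      have := LinearMap.congr_fun h x
      simpa using this
    · intro g hg
      have := hfK g hg
      simp at this ⊢
      exact this
  · obtain ⟨f, hf, hle⟩ := Submodule.exists_le_ker_of_lt_top _ (lt_top_iff_ne_top.2 hs)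
    refine ⟨f, hf, fun g hg => ?_⟩
    have : f g = 0 := hle (Submodule.subset_span hg)
    rw [this]

lemma aux_lex_cons {n : ℕ} (a : ℝ) (v : Fin n → ℝ) (ha : 0 < a ∨ a = 0 ∧ LexLt 0 v) :
    LexLt 0 (Fin.cons a v : Fin (n+1) → ℝ) := by
  rcases ha with ha | ⟨ha, k, hk, hkk⟩
  · exact ⟨0, fun i hi => absurd hi (by simp), by simpa using ha⟩
  · refine ⟨k.succ, fun i hi => ?_, by simpa using hkk⟩
    induction i using Fin.cases with
    | zero => simp [ha]
    | succ i => simpa using hk i (by simpa using hi)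

lemma aux_main (n : ℕ) : ∀ (V : Type) [NormedAddCommGroup V] [NormedSpace ℝ V]
    [FiniteDimensional ℝ V] (_ : Module.finrank ℝ V = n) (K : Set V)
    (_ : ∀ g ∈ K, ∀ f ∈ K, g + f ∈ K)
    (_ : ∀ g ∈ K, ∀ l : ℝ, 0 < l → l • g ∈ K) (_ : (0 : V) ∉ K)
    (E : Set V) (_ : E.Finite) (_ : E ⊆ K),
    ∃ φ : Fin n → (V →ₗ[ℝ] ℝ), (∀ v, (∀ i, φ i v = 0) → v = 0) ∧
      (∀ g ∈ K, LexLt 0 (fun i => φ i g)) ∧ ∀ e ∈ E, ∀ i, 0 ≤ φ i e := by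
  induction n with
  | zero =>
    intro V _ _ _ hV K h1 h2 h0 E hE hEK
    have : Subsingleton V := Module.finrank_zero_iff.1 hV
    refine ⟨fun i => 0, fun v _ => Subsingleton.elim _ _, fun g hg => ?_, fun _ _ i => i.elim0⟩
    exact absurd (Subsingleton.elim g 0 ▸ hg) h0
  | succ n ih =>
    intro V _ _ _ hV K h1 h2 h0 E hE hEK
    have : Nontrivial V := Module.nontrivial_of_finrank_pos (R := ℝ) (by omega)
    obtain ⟨φ, hφ, hφK⟩ := aux_sep_s19 K h1 h2 h0
    have hfr : Module.finrank ℝ (LinearMap.ker φ) = n := by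
      have := Module.Dual.finrank_ker_add_one_of_ne_zero (f := φ) hφ
      omega
    obtain ⟨ψ, hinj, hlex, hpos⟩ := ih (LinearMap.ker φ) hfr (Subtype.val ⁻¹' K)
      (fun g hg f hf => h1 _ hg _ hf) (fun g hg l hl => h2 _ hg l hl) h0
      (Subtype.val ⁻¹' E) (hE.preimage Subtype.val_injective.injOn) (fun x hx => hEK hx)
    have hext : ∀ i, ∃ χ : V →ₗ[ℝ] ℝ, (∀ w : LinearMap.ker φ, χ w = ψ i w) ∧
        ∀ e ∈ E, 0 ≤ χ e := by
      intro i
      obtain ⟨χ, hχ⟩ := LinearMap.exists_extend (ψ i)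
      have hχ' : ∀ w : LinearMap.ker φ, χ w = ψ i w := fun w => by rw [← hχ]; rfl
      obtain ⟨c, hc⟩ := (hE.image (fun e => - χ e / φ e)).bddAbove
      refine ⟨χ + c • φ, fun w => ?_, fun e he => ?_⟩
      · have : φ w = 0 := w.2
        simp [this, hχ']
      · rcases (hφK e (hEK he)).lt_or_eq with hp | hz
        · have := hc (Set.mem_image_of_mem _ he)
          rw [div_le_iff₀ hp] at this
          simp
          linarith
        · have h3 := hpos ⟨e, hz.symm⟩ he i
          rw [← hχ'] at h3
          simpa [← hz] using h3
    choose χ hχ hχE using hext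
    refine ⟨Fin.cons φ χ, fun v hv => ?_, fun g hg => ?_, fun e he i => ?_⟩
    · have hv0 : φ v = 0 := by simpa using hv 0
      have := hinj ⟨v, hv0⟩ (fun i => by
        rw [← hχ]; simpa using hv i.succ)
      simpa using congrArg Subtype.val this
    · have : (fun i => (Fin.cons φ χ : Fin (n+1) → (V →ₗ[ℝ] ℝ)) i g)
          = Fin.cons (φ g) (fun i => χ i g) := by
        ext i
        induction i using Fin.cases <;> simp
      rw [this]
      apply aux_lex_cons
      rcases (hφK g hg).lt_or_eq with hp | hz
      · exact Or.inl hp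
      · right
        refine ⟨hz.symm, ?_⟩
        have h3 := hlex ⟨g, hz.symm⟩ hg
        simpa only [← hχ] using h3
    · induction i using Fin.cases with
      | zero => simpa using hφK e (hEK he)
      | succ i => simpa using hχE i e he

lemma aux_exists {n : ℕ} (K : Set (Fin n → ℝ)) (hK : CohDesirable K) :
    (matPolar K ∩ fullRankStochastic n).Nonempty := by
  obtain ⟨h1, h2, h3, h0⟩ := hK
  obtain ⟨φ, hinj, hlex, hpos⟩ := aux_main n (Fin n → ℝ) (by simp) K h1 h2 h0
    (Set.range (fun j : Fin n => (Pi.single j 1 : Fin n → ℝ))) (Set.finite_range _) (by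
      rintro _ ⟨j, rfl⟩
      refine h3 _ (fun i => ?_) (by simp)
      by_cases h : i = j
      · subst h; simp
      · simp [h])
  let A : Matrix (Fin n) (Fin n) ℝ := Matrix.of fun i j => φ i (Pi.single j 1)
  have hA : ∀ v i, A.mulVec v i = φ i v := by
    intro v i
    conv_rhs => rw [LinearMap.pi_apply_eq_sum_univ (φ i) v]
    simp only [Matrix.mulVec, dotProduct, A, Matrix.of_apply, smul_eq_mul]
    refine Finset.sum_congr rfl fun j _ => ?_
    rw [mul_comm]
    congr 2
    ext k
    simp [Pi.single_apply, eq_comm]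
  have hdet : IsUnit A.det := by
    rw [← Matrix.isUnit_iff_isUnit_det, ← Matrix.mulVec_injective_iff_isUnit]
    intro v w hvw
    rw [← sub_eq_zero]
    apply hinj
    intro i
    rw [map_sub, ← hA, ← hA, sub_eq_zero]
    exact congrFun hvw i
  have hnn : ∀ i j, 0 ≤ A i j := fun i j => hpos _ ⟨j, rfl⟩ i
  have hsum : ∀ i, 0 < ∑ j, A i j := by
    intro i
    refine (Finset.sum_nonneg fun j _ => hnn i j).lt_of_ne fun h => ?_
    have := (Finset.sum_eq_zero_iff_of_nonneg fun j _ => hnn i j).1 h.symm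
    exact hdet.ne_zero (Matrix.det_eq_zero_of_row_eq_zero i fun j => this j (Finset.mem_univ _))
  refine ⟨Matrix.diagonal (fun i => (∑ j, A i j)⁻¹) * A, fun g hg => ?_, ⟨?_, ?_⟩, ?_⟩
  · obtain ⟨k, hk, hkk⟩ := hlex g hg
    rw [← Matrix.mulVec_mulVec]
    refine ⟨k, fun i hi => ?_, ?_⟩
    · have : (0:ℝ) = φ i g := hk i hi
      rw [Matrix.mulVec_diagonal, hA, ← this]; simp
    · rw [Matrix.mulVec_diagonal, hA]
      exact mul_pos (inv_pos.2 (hsum k)) hkk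
  · intro i j
    rw [Matrix.diagonal_mul]
    exact mul_nonneg (inv_pos.2 (hsum i)).le (hnn i j)
  · intro i
    simp only [Matrix.diagonal_mul]
    rw [← Finset.mul_sum]
    exact inv_mul_cancel₀ (hsum i).ne'
  · rw [Matrix.det_mul, Matrix.det_diagonal]
    refine IsUnit.mul ?_ hdet
    rw [isUnit_iff_ne_zero]
    exact Finset.prod_ne_zero_iff.2 fun i _ => (inv_pos.2 (hsum i)).ne'

lemma aux_lex_zero {n : ℕ} : ¬ LexLt (0 : Fin n → ℝ) 0 := by
  rintro ⟨k, _, h⟩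
  exact lt_irrefl _ h

lemma aux_lex_add {n : ℕ} {v w : Fin n → ℝ} (hv : LexLt 0 v) (hw : LexLt 0 w) :
    LexLt 0 (v + w) := by
  obtain ⟨k, hk, hkk⟩ := hv
  obtain ⟨l, hl, hll⟩ := hw
  simp only [Pi.zero_apply] at *
  rcases lt_trichotomy k l with h | h | h
  · exact ⟨k, fun i hi => by simp [← hk i hi, ← hl i (hi.trans h)], by simp [← hl k h, hkk]⟩
  · subst h
    exact ⟨k, fun i hi => by simp [← hk i hi, ← hl i hi], by simp; linarith⟩
  · exact ⟨l, fun i hi => by simp [← hl i hi, ← hk i (hi.trans h)], by simp [← hk l h, hll]⟩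

lemma aux_lex_smul {n : ℕ} {v : Fin n → ℝ} (hv : LexLt 0 v) {c : ℝ} (hc : 0 < c) :
    LexLt 0 (c • v) := by
  obtain ⟨k, hk, hkk⟩ := hv
  exact ⟨k, fun i hi => by simp [← hk i hi], by simpa using mul_pos hc hkk⟩

lemma aux_lex_nonneg {n : ℕ} {v : Fin n → ℝ} (hv : ∀ i, 0 ≤ v i) (h : v ≠ 0) : LexLt 0 v := by
  have hne : ∃ i, v i ≠ 0 := by
    by_contra hcon
    push Not at hcon
    exact h (funext hcon)
  have hex : (Finset.univ.filter fun i => v i ≠ 0).Nonempty := by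
    obtain ⟨i, hi⟩ := hne
    exact ⟨i, by simpa using hi⟩
  refine ⟨(Finset.univ.filter fun i => v i ≠ 0).min' hex, fun i hi => ?_, ?_⟩
  · by_contra hcon
    exact absurd (Finset.min'_le _ i (by simpa [eq_comm] using hcon)) (not_le.2 hi)
  · have := Finset.min'_mem _ hex
    simp only [Finset.mem_filter, Finset.mem_univ, true_and] at this
    exact (hv _).lt_of_ne this.symm

lemma aux_vecPolar_coh {n : ℕ} (P : Set (Matrix (Fin n) (Fin n) ℝ)) (hne : P.Nonempty)
    (hP : P ⊆ fullRankStochastic n) : CohDesirable (vecPolar P) := by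
  refine ⟨fun g hg f hf A hA => ?_, fun g hg l hl A hA => ?_, fun g hg h0 A hA => ?_, fun h => ?_⟩
  · rw [Matrix.mulVec_add]
    exact aux_lex_add (hg A hA) (hf A hA)
  · rw [Matrix.mulVec_smul]
    exact aux_lex_smul (hg A hA) hl
  · obtain ⟨⟨hs, _⟩, hd⟩ := hP hA
    apply aux_lex_nonneg
    · intro i
      simp only [Matrix.mulVec, dotProduct]
      exact Finset.sum_nonneg fun j _ => mul_nonneg (hs i j) (hg j)
    · intro h
      apply h0
      rw [← Matrix.isUnit_iff_isUnit_det, ← Matrix.mulVec_injective_iff_isUnit] at hd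
      apply hd
      simpa using h
  · obtain ⟨A, hA⟩ := hne
    have := h A hA
    rw [Matrix.mulVec_zero] at this
    exact aux_lex_zero this

lemma aux_extend {n : ℕ} (K : Set (Fin n → ℝ)) (hK : CohDesirable K) (f : Fin n → ℝ)
    (hf : f ∉ K) (hf0 : f ≠ 0) :
    ∃ K', CohDesirable K' ∧ K ⊆ K' ∧ -f ∈ K' := by
  obtain ⟨h1, h2, h3, h0⟩ := hK
  refine ⟨{g | (∃ l : ℝ, 0 ≤ l ∧ g + l • f ∈ K) ∨ ∃ l : ℝ, 0 < l ∧ g = -(l • f)},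
    ⟨?_, ?_, fun g hg hne => ?_, ?_⟩, fun g hg => ?_, ?_⟩
  · rintro g (⟨l, hl, hg⟩ | ⟨l, hl, rfl⟩) g' (⟨m, hm, hg'⟩ | ⟨m, hm, rfl⟩)
    · left
      refine ⟨l + m, by positivity, ?_⟩
      convert h1 _ hg _ hg' using 1
      module
    · left
      refine ⟨l + m, by positivity, ?_⟩
      convert hg using 1
      module
    · left
      refine ⟨l + m, by positivity, ?_⟩
      convert hg' using 1
      module
    · right
      exact ⟨l + m, by positivity, by module⟩
  · rintro g (⟨l, hl, hg⟩ | ⟨l, hl, rfl⟩) c hc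
    · left
      refine ⟨c * l, by positivity, ?_⟩
      convert h2 _ hg c hc using 1
      module
    · right
      exact ⟨c * l, by positivity, by module⟩
  · exact Or.inl ⟨0, le_rfl, by simpa using h3 g hg hne⟩
  · rintro (⟨l, hl, hg⟩ | ⟨l, hl, hg⟩)
    · rw [zero_add] at hg
      rcases hl.lt_or_eq with hl | rfl
      · apply hf
        have := h2 _ hg l⁻¹ (inv_pos.2 hl)
        rwa [inv_smul_smul₀ hl.ne'] at this
      · exact h0 (by simpa using hg)
    · have : l • f = 0 := by simpa using hg.symm
      rcases smul_eq_zero.1 this with h | h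
      · exact hl.ne' h
      · exact hf0 h
  · exact Or.inl ⟨0, le_rfl, by simpa using hg⟩
  · exact Or.inr ⟨1, one_pos, by simp⟩

/-- The map `G : K ↦ K^⧫ ∩ T_{n,n}` is a bijection from coherent sets of desirable
gambles onto `L`-credal sets, with inverse `𝒫 ↦ 𝒫^◊`. -/
theorem lexCredal_bijection (n : ℕ) :
    (∀ K : Set (Fin n → ℝ), CohDesirable K →
      LCredal (matPolar K ∩ fullRankStochastic n)) ∧
    (∀ P : Set (Matrix (Fin n) (Fin n) ℝ), LCredal P → CohDesirable (vecPolar P)) ∧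
    (∀ K : Set (Fin n → ℝ), CohDesirable K →
      vecPolar (matPolar K ∩ fullRankStochastic n) = K) ∧
    (∀ P : Set (Matrix (Fin n) (Fin n) ℝ), LCredal P →
      matPolar (vecPolar P) ∩ fullRankStochastic n = P) := by
  refine ⟨fun K hK => ?_, fun P hP => ?_, fun K hK => ?_, fun P hP => ?_⟩
  · refine ⟨aux_exists K hK, matPolar K, ⟨K, fun t => t.1, ?_⟩, rfl⟩
    ext A
    simp [matPolar]
  · obtain ⟨hne, S, _, hS⟩ := hP
    exact aux_vecPolar_coh P hne (hS ▸ Set.inter_subset_right)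
  · ext f
    refine ⟨fun h => ?_, fun h A hA => hA.1 f h⟩
    by_contra hf
    by_cases hf0 : f = 0
    · subst hf0
      obtain ⟨A, hA⟩ := aux_exists K hK
      have := h A hA
      rw [Matrix.mulVec_zero] at this
      exact aux_lex_zero this
    · obtain ⟨K', hK', hsub, hmem⟩ := aux_extend K hK f hf hf0
      obtain ⟨A, hA, hT⟩ := aux_exists K' hK'
      have ha := h A ⟨fun g hg => hA g (hsub hg), hT⟩
      have hb := hA _ hmem
      have := aux_lex_add ha hb
      rw [← Matrix.mulVec_add, add_neg_cancel, Matrix.mulVec_zero] at this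
      exact aux_lex_zero this
  · obtain ⟨hne, S, ⟨T, g, rfl⟩, hS⟩ := hP
    apply Set.Subset.antisymm
    · rintro A ⟨hA, hT⟩
      rw [hS]
      refine ⟨fun t => hA _ fun B hB => ?_, hT⟩
      rw [hS] at hB
      exact hB.1 t
    · intro A hA
      exact ⟨fun f hf => hf A hA, (hS ▸ hA : A ∈ _ ∩ fullRankStochastic n).2⟩
end
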